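/- arXiv:2405.16814 — 7 statements merged into one kernel-verified Lean document; each statement's English description precedes it below -/
import Mathlib

section
/- For every real number x with 0 < |x| < 1/4, the series ∑_{n=1}^∞ C_n · H_{2n} · x^n equals (1/(2x)) · [(1 − √(1−4x)) − (1 + √(1−4x)) · ln(1 + √(1−4x)) + ln 2 + √(1−4x) · ln(2 − 8x)]. -/
/-! Put `s = √(1 - 4x)`, `a n = binom(2n, n)`, `A = ∑ a n xⁿ`, `B = ∑ a n H_{2n} xⁿ` and
`F = ∑ C n H_{2n} xⁿ`. On `|x| < 1/4` these series may be differentiated term by term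
(`series_deriv`), and each of them is then identified by a first-order differential equation.

* `(n + 1) a (n+1) = (4n + 2) a n` says `(1 - 4x) A' = 2 A`, whence `(A s)' = 0` and `A s = 1`.
* The same recurrence and `H_{2n+2} - H_{2n} = 1/(2n+1) + 1/(2n+2)` say that `(1 - 4x) B' - 2 B` has
  coefficients `a (n+1) / 2 + 2 a n`. By the formula for `A` its sum is `2(2 + s)/(s(1 + s))`, so
  that `B s` has the same derivative as `log ((1 + s)/2) - 2 log s`.
* `(n + 1) C n = a n` says `(x F)' = B`, and `2 B` is the derivative of the bracket in the theorem,
  which vanishes at `0`. -/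

open Real

/-- The `n`-th harmonic number `H n = ∑_{k=1}^n 1/k`. -/
noncomputable def H (n : ℕ) : ℝ := ∑ k ∈ Finset.range n, 1 / (k + 1 : ℝ)

/-- The `n`-th Catalan number `C n = (1/(n+1)) * binom(2n, n)`, as a real number. -/
noncomputable def C (n : ℕ) : ℝ := (Nat.choose (2 * n) n : ℝ) / (n + 1)

/-- A common majorant for the series below and, up to a factor `2`, for their termwise derivatives. -/
lemma sq_bound_summable {r : ℝ} (h0 : 0 ≤ r) (hr : r < 1 / 4) :
    Summable (fun n : ℕ => 2 * ((n : ℝ) + 1) ^ 2 * 4 ^ (n + 1) * r ^ n) := by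
  have h : ‖4 * r‖ < 1 := by
    rw [Real.norm_eq_abs, abs_of_nonneg (by positivity)]; linarith
  have h2 := summable_pow_mul_geometric_of_norm_lt_one 2 h
  have h1 := summable_pow_mul_geometric_of_norm_lt_one 1 h
  have h00 := summable_pow_mul_geometric_of_norm_lt_one 0 h
  refine (((h2.mul_left 8).add (h1.mul_left 16)).add (h00.mul_left 8)).congr fun n => ?_
  rw [mul_pow]; ring

lemma bounded_summable {c : ℕ → ℝ} (hc : ∀ n, |c n| ≤ 2 * (n + 1) * 4 ^ n) {x : ℝ}
    (hx : |x| < 1 / 4) : Summable (fun n => c n * x ^ n) := by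
  refine Summable.of_norm_bounded (sq_bound_summable (abs_nonneg x) hx) fun n => ?_
  rw [Real.norm_eq_abs, abs_mul, abs_pow]
  refine mul_le_mul_of_nonneg_right ((hc n).trans ?_) (by positivity)
  have hn : (0 : ℝ) ≤ n := Nat.cast_nonneg n
  gcongr
  · nlinarith
  · norm_num
  · lia

/-- Term-by-term differentiation inside the disc of radius `1/4`. The derivative `D` is given with
the expansions of both `D` and `x D`, so that differential equations can be read off coefficients
without shifting indices. -/
lemma series_deriv {c : ℕ → ℝ} (hc : ∀ n, |c n| ≤ 2 * (n + 1) * 4 ^ n) {x : ℝ}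
    (hx : |x| < 1 / 4) :
    ∃ D : ℝ, HasDerivAt (fun y => ∑' n, c n * y ^ n) D x ∧
      HasSum (fun n : ℕ => ((n : ℝ) + 1) * c (n + 1) * x ^ n) D ∧
      HasSum (fun n : ℕ => (n : ℝ) * c n * x ^ n) (x * D) := by
  obtain ⟨r, hxr, hr⟩ := exists_between hx
  have hr0 : 0 < r := (abs_nonneg x).trans_lt hxr
  -- After a shift by one index the terms are at most twice those of `sq_bound_summable`.
  have hu : Summable (fun n : ℕ => (n : ℝ) * (2 * (n + 1) * 4 ^ n) * r ^ (n - 1)) := by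
    rw [← summable_nat_add_iff 1]
    refine Summable.of_nonneg_of_le (fun n => ?_) (fun n => ?_)
      ((sq_bound_summable hr0.le hr).mul_left 2)
    · positivity
    have hp : 0 ≤ 8 * ((n : ℝ) * (n + 1)) * 4 ^ n * r ^ n := by positivity
    rw [Nat.add_sub_cancel]
    push_cast
    linear_combination hp
  have hb : ∀ (n : ℕ) (y : ℝ), y ∈ Set.Ioo (-r) r →
      ‖c n * ((n : ℝ) * y ^ (n - 1))‖ ≤ (n : ℝ) * (2 * (n + 1) * 4 ^ n) * r ^ (n - 1) := by
    intro n y hy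
    have hy' : |y| ≤ r := (abs_lt.mpr hy).le
    rw [Real.norm_eq_abs, abs_mul, abs_mul, abs_pow, Nat.abs_cast]
    calc |c n| * (n * |y| ^ (n - 1)) ≤ (2 * (n + 1) * 4 ^ n) * (n * r ^ (n - 1)) := by
          gcongr; exact hc n
      _ = _ := by ring
  have hxm : x ∈ Set.Ioo (-r) r := abs_lt.mp hxr
  have hD := hasDerivAt_tsum_of_isPreconnected hu isOpen_Ioo isPreconnected_Ioo
    (y₀ := x) (g := fun n y => c n * y ^ n)
    (fun n y _ => (hasDerivAt_pow n y).const_mul (c n)) hb hxm (bounded_summable hc hx) hxm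
  have hs : Summable (fun n : ℕ => c n * ((n : ℝ) * x ^ (n - 1))) :=
    Summable.of_norm_bounded hu fun n => hb n x hxm
  refine ⟨_, hD, ?_, ?_⟩
  · have h := (hasSum_nat_add_iff' 1).mpr hs.hasSum
    simp only [Finset.range_one, Finset.sum_singleton, Nat.cast_zero, zero_mul, mul_zero,
      sub_zero] at h
    convert! h using 1
    funext n
    push_cast [Nat.add_sub_cancel]
    ring
  · convert! hs.hasSum.mul_left x using 1
    funext n
    rcases n with _ | n
    · simp
    · simp only [Nat.add_sub_cancel]
      ring

lemma const_of_deriv_zero {f : ℝ → ℝ} (hf : ∀ y : ℝ, |y| < 1 / 4 → HasDerivAt f 0 y) {x : ℝ}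
    (hx : |x| < 1 / 4) : f x = f 0 :=
  isOpen_Ioo.is_const_of_deriv_eq_zero (s := Set.Ioo (-(1 / 4 : ℝ)) (1 / 4)) isPreconnected_Ioo
    (fun y hy => (hf y (abs_lt.mpr hy)).differentiableAt.differentiableWithinAt)
    (fun y hy => (hf y (abs_lt.mpr hy)).deriv) (abs_lt.mp hx) (by norm_num)

lemma harmonic_bounds (n : ℕ) : 0 ≤ H n ∧ H n ≤ n := by
  refine ⟨Finset.sum_nonneg fun k _ => by positivity, ?_⟩
  have : H n ≤ ∑ k ∈ Finset.range n, (1 : ℝ) := Finset.sum_le_sum fun k _ => by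
    rw [div_le_one (by positivity)]; linarith [(Nat.cast_nonneg k : (0 : ℝ) ≤ k)]
  simpa using this

lemma harmonic_step (n : ℕ) :
    H (2 * (n + 1)) = H (2 * n) + 1 / (2 * (n : ℝ) + 1) + 1 / (2 * (n : ℝ) + 2) := by
  rw [show 2 * (n + 1) = 2 * n + 1 + 1 by ring]
  unfold H
  rw [Finset.sum_range_succ, Finset.sum_range_succ]
  push_cast
  ring

lemma centralBinom_rec (n : ℕ) :
    ((n : ℝ) + 1) * (n + 1).centralBinom = (4 * n + 2) * n.centralBinom := by
  have := Nat.succ_mul_centralBinom_succ n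
  have h : (((n + 1) * (n + 1).centralBinom : ℕ) : ℝ)
    = ((2 * (2 * n + 1) * n.centralBinom : ℕ) : ℝ) := by rw [this]
  push_cast at h
  rw [h]; ring

lemma centralBinom_le (n : ℕ) : (n.centralBinom : ℝ) ≤ 4 ^ n := by
  have h := Nat.choose_le_two_pow (2 * n) n
  rw [pow_mul] at h
  rw [Nat.centralBinom_eq_two_mul_choose]
  exact_mod_cast h

lemma bound_A (n : ℕ) : |(n.centralBinom : ℝ)| ≤ 2 * (n + 1) * 4 ^ n := by
  rw [Nat.abs_cast]
  have : (0 : ℝ) < 4 ^ n := by positivity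
  nlinarith [centralBinom_le n, mul_nonneg (Nat.cast_nonneg n : (0 : ℝ) ≤ n) this.le]

lemma bound_B (n : ℕ) : |(n.centralBinom : ℝ) * H (2 * n)| ≤ 2 * (n + 1) * 4 ^ n := by
  obtain ⟨h0, h1⟩ := harmonic_bounds (2 * n)
  rw [abs_mul, Nat.abs_cast, abs_of_nonneg h0, mul_comm (2 * ((n : ℝ) + 1))]
  push_cast at h1
  exact mul_le_mul (centralBinom_le n) (by linarith) h0 (by positivity)

lemma succ_mul_C (n : ℕ) : ((n : ℝ) + 1) * C n = n.centralBinom := by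
  rw [C, Nat.centralBinom_eq_two_mul_choose]
  field_simp

lemma bound_F (n : ℕ) : |C n * H (2 * n)| ≤ 2 * (n + 1) * 4 ^ n := by
  refine le_trans ?_ (bound_B n)
  rw [abs_mul, abs_mul, ← succ_mul_C, abs_mul]
  refine mul_le_mul_of_nonneg_right ?_ (abs_nonneg _)
  refine le_mul_of_one_le_left (abs_nonneg _) ?_
  rw [abs_of_nonneg (by positivity)]
  linarith [(Nat.cast_nonneg n : (0 : ℝ) ≤ n)]

lemma four_mul_lt {x : ℝ} (hx : |x| < 1 / 4) : 0 < 1 - 4 * x := by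
  linarith [(abs_lt.mp hx).2]

lemma hasDerivAt_s {x : ℝ} (hx : |x| < 1 / 4) :
    HasDerivAt (fun y => √(1 - 4 * y)) (-2 / √(1 - 4 * x)) x := by
  have h := (((hasDerivAt_id x).const_mul 4).const_sub 1).sqrt (four_mul_lt hx).ne'
  convert! h using 1
  simp only [id]
  field_simp
  norm_num

/-- The generating function of the central binomial coefficients is `1 / √(1 - 4x)`. -/
lemma A_eq {x : ℝ} (hx : |x| < 1 / 4) :
    (∑' n : ℕ, (n.centralBinom : ℝ) * x ^ n) * √(1 - 4 * x) = 1 := by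
  have key := const_of_deriv_zero
    (f := fun y => (∑' n : ℕ, (n.centralBinom : ℝ) * y ^ n) * √(1 - 4 * y)) ?_ hx
  · rw [key, tsum_eq_single 0 (by intro n hn; simp [hn])]
    simp
  intro y hy
  obtain ⟨D, hD, h1, h2⟩ := series_deriv bound_A hy
  have h3 := (bounded_summable bound_A hy).hasSum
  have hode : D - 4 * (y * D) - 2 * ∑' n : ℕ, (n.centralBinom : ℝ) * y ^ n = 0 := by
    refine ((h1.sub (h2.mul_left 4)).sub (h3.mul_left 2)).unique ?_
    convert! hasSum_zero using 2 with n
    linear_combination y ^ n * centralBinom_rec n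
  convert! hD.mul (hasDerivAt_s hy) using 1
  have hs := four_mul_lt hy
  have hs0 : √(1 - 4 * y) ≠ 0 := (Real.sqrt_pos.mpr hs).ne'
  have hsq := Real.sq_sqrt hs.le
  field_simp
  rw [hsq]
  linear_combination -hode

/-- The first-order equation for `∑ binom(2n, n) H_{2n} xⁿ`, with its inhomogeneous term in closed
form. -/
lemma B_ode {x : ℝ} (hx : |x| < 1 / 4) :
    ∃ D, HasDerivAt (fun y => ∑' n : ℕ, (n.centralBinom : ℝ) * H (2 * n) * y ^ n) D x ∧
      (1 - 4 * x) * D - 2 * ∑' n : ℕ, (n.centralBinom : ℝ) * H (2 * n) * x ^ n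
        = 2 * (2 + √(1 - 4 * x)) / (√(1 - 4 * x) * (1 + √(1 - 4 * x))) := by
  obtain ⟨D, hD, h1, h2⟩ := series_deriv bound_B hx
  refine ⟨D, hD, ?_⟩
  have h3 := (bounded_summable bound_B hx).hasSum
  have hA := (bounded_summable bound_A hx).hasSum
  have hAs := A_eq hx
  have hs := four_mul_lt hx
  have hspos := Real.sqrt_pos.mpr hs
  have hsq := Real.sq_sqrt hs.le
  set s := √(1 - 4 * x) with hsdef
  set A := ∑' n : ℕ, (n.centralBinom : ℝ) * x ^ n
  set B := ∑' n : ℕ, (n.centralBinom : ℝ) * H (2 * n) * x ^ n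
  have hR : HasSum (fun n : ℕ => (((n + 1).centralBinom : ℝ) / 2 + 2 * n.centralBinom) * x ^ n)
      ((1 - 4 * x) * D - 2 * B) := by
    convert! (h1.sub (h2.mul_left 4)).sub (h3.mul_left 2) using 1
    · funext n
      have hr := centralBinom_rec n
      have hr' : ((n + 1).centralBinom : ℝ) = (4 * n + 2) * n.centralBinom / (n + 1) := by
        field_simp; linear_combination hr
      rw [harmonic_step, hr']
      field_simp
      ring
    · ring
  rcases eq_or_ne x 0 with h0 | h0
  -- At `x = 0` both sides are the constant coefficient; elsewhere `x` can be cancelled.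
  · have hs1 : s = 1 := by rw [hsdef, h0]; simp
    rw [hs1, ← hR.tsum_eq, tsum_eq_single 0 (by intro n hn; simp [hn, h0])]
    norm_num [Nat.centralBinom_eq_two_mul_choose]
  · have hA1 := (hasSum_nat_add_iff' 1).mpr hA
    simp only [Finset.range_one, Finset.sum_singleton, Nat.centralBinom_zero, Nat.cast_one,
      pow_zero, mul_one] at hA1
    have hxR : x * ((1 - 4 * x) * D - 2 * B) = (A - 1) / 2 + 2 * x * A := by
      refine (hR.mul_left x).unique ?_
      convert! (hA1.div_const 2).add (hA.mul_left (2 * x)) using 1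
      funext n
      ring
    have hA' : A = 1 / s := by field_simp; exact hAs
    rw [hA'] at hxR
    have h4x : x = (1 - s) * (1 + s) / 4 := by linear_combination (1 / 4 : ℝ) * hsq
    apply mul_left_cancel₀ h0
    rw [hxR, h4x]
    field_simp
    ring

/-- Closed form of `∑ binom(2n, n) H_{2n} xⁿ`: `√(1 - 4x)` is an integrating factor of `B_ode`. -/
lemma B_eq {x : ℝ} (hx : |x| < 1 / 4) :
    (∑' n : ℕ, (n.centralBinom : ℝ) * H (2 * n) * x ^ n) * √(1 - 4 * x)
      = log (1 + √(1 - 4 * x)) - log 2 - 2 * log √(1 - 4 * x) := by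
  have key := const_of_deriv_zero
    (f := fun y => (∑' n : ℕ, (n.centralBinom : ℝ) * H (2 * n) * y ^ n) * √(1 - 4 * y)
      - (log (1 + √(1 - 4 * y)) - log 2 - 2 * log √(1 - 4 * y))) ?_ hx
  · rw [← sub_eq_zero, key, tsum_eq_single 0 (by intro n hn; simp [hn])]
    norm_num [H]
  intro y hy
  obtain ⟨D, hD, hode⟩ := B_ode hy
  have hs := four_mul_lt hy
  have hspos := Real.sqrt_pos.mpr hs
  have hsq := Real.sq_sqrt hs.le
  have hds := hasDerivAt_s hy
  have hd := (hD.mul hds).sub ((((hds.const_add 1).log (by positivity)).sub_const (log 2)).sub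
    ((hds.log hspos.ne').const_mul 2))
  convert! hd using 1
  generalize √(1 - 4 * y) = s at hode hspos hsq ⊢
  rw [← hsq] at hode
  field_simp at hode ⊢
  linear_combination -hode

theorem stmt_11 (x : ℝ) (hx0 : 0 < |x|) (hx : |x| < 1 / 4) :
    ∑' n : ℕ, C (n + 1) * H (2 * (n + 1)) * x ^ (n + 1)
      = (1 / (2 * x)) *
        ((1 - Real.sqrt (1 - 4 * x)) -
          (1 + Real.sqrt (1 - 4 * x)) * Real.log (1 + Real.sqrt (1 - 4 * x)) +
          Real.log 2 + Real.sqrt (1 - 4 * x) * Real.log (2 - 8 * x)) := by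
  -- `log (2 - 8x) = log 2 + 2 log s`; in this form only `log s` and `log (1 + s)` need
  -- differentiating.
  have hlog : log (2 - 8 * x) = log 2 + 2 * log √(1 - 4 * x) := by
    have hs := four_mul_lt hx
    rw [Real.log_sqrt hs.le, show 2 - 8 * x = 2 * (1 - 4 * x) by ring,
      Real.log_mul two_ne_zero hs.ne']
    ring
  have key := const_of_deriv_zero
    (f := fun y => 2 * (y * ∑' n : ℕ, C n * H (2 * n) * y ^ n)
      - (1 - √(1 - 4 * y) - (1 + √(1 - 4 * y)) * log (1 + √(1 - 4 * y)) + log 2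
        + √(1 - 4 * y) * (log 2 + 2 * log √(1 - 4 * y)))) ?_ hx
  · have hshift : ∑' n : ℕ, C n * H (2 * n) * x ^ n
        = ∑' n : ℕ, C (n + 1) * H (2 * (n + 1)) * x ^ (n + 1) := by
      rw [(bounded_summable bound_F hx).tsum_eq_zero_add]
      simp [H]
    rw [← hshift, hlog]
    have hxne : x ≠ 0 := abs_pos.mp hx0
    norm_num at key
    generalize √(1 - 4 * x) = s at key ⊢
    field_simp
    linear_combination key
  intro y hy
  obtain ⟨D, hD, -, h2⟩ := series_deriv bound_F hy
  have hB : (∑' n : ℕ, C n * H (2 * n) * y ^ n) + y * D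
      = ∑' n : ℕ, (n.centralBinom : ℝ) * H (2 * n) * y ^ n := by
    refine ((bounded_summable bound_F hy).hasSum.add h2).unique ?_
    convert! (bounded_summable bound_B hy).hasSum using 2 with n
    rw [← succ_mul_C]; ring
  have hBs := B_eq hy
  have hspos := Real.sqrt_pos.mpr (four_mul_lt hy)
  have hds := hasDerivAt_s hy
  have hd := (((hasDerivAt_id y).mul hD).const_mul 2).sub
    ((((hds.const_sub 1).sub ((hds.const_add 1).mul ((hds.const_add 1).log (by positivity)))).add_const
      (log 2)).add (hds.mul (((hds.log hspos.ne').const_mul 2).const_add (log 2))))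
  convert! hd using 1
  rw [← hB] at hBs
  simp only [id]
  generalize √(1 - 4 * y) = s at hBs hspos ⊢
  field_simp
  linear_combination (-2) * hBs
end

section
/- The series ∑_{n=1}^∞ (C_n · (H_{2n} − H_n)/4^{2n}) · binom(2n+2, n+1) equals (16/π) · (2G + π − 2 − ln 2 − π ln 2). -/
/-!
Write `a m = binom(2m, m) / 4^m` (`cb m` below) and `h m = H (2m) - H m` (`dH m`). The summand of
index `n` is `8 a_m² h_{m-1} / (2m - 1)` with `m = n + 1`. Since `a_m² / (2m - 1)` has the
hypergeometric antidifference `-(2m - 1) a_{m-1}²`, summation by parts gives (`partial_sum_eq`)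
`∑_{n < N} = -8 (2N + 1) a_N² (h_N + 2) + 16 - 8 ∑_{m = 1}^N a_m² / (2m)`.
Wallis' product gives `(2N + 1) a_N² → 2/π`, and `h_N → log 2`, so everything rests on
`∑_{m ≥ 1} a_m² / (2m) = (2/π) (π log 2 - 2 G)`.

For that series, `π/2 * a_m / (2m)` is the integral of `(π/2 - x) cos x sin^{2m-1} x` over `[0, π/2]`,
and `∑_{m ≥ 1} a_m cos x sin^{2m-1} x = (1 - cos x) / sin x = tan (x/2)`. The remainder is controlled
by the closed form of its derivative (`hasDerivAt_tailQ`), so that the sum equals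
`(2/π) ∫ (π/2 - x) tan (x/2)` (`tendsto_sum_cb_sq`). Expanding `tan (x/2)` in sines with the conjugate
Dirichlet kernel (`kernel_identity`) and integrating term by term, the first `2N` terms contribute
`π h_N - 2 ∑_{j < N} (-1)^j / (2j + 1)²`, and the remainder is `O(1/N)`; the limit is
`π log 2 - 2 G` (`tanInt_value`).
-/

open Real

/-- Catalan's constant `G = ∑_{k=0}^∞ (-1)^k/(2k+1)²`. -/
noncomputable def G : ℝ := ∑' k : ℕ, (-1 : ℝ) ^ k / (2 * (k : ℝ) + 1) ^ 2

open Filter Topology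

/-! ### Central binomial coefficients, harmonic differences and summation by parts -/

/-- The normalised central binomial coefficient `binom(2n, n) / 4^n`. -/
noncomputable def cb (n : ℕ) : ℝ := (Nat.centralBinom n : ℝ) / 4 ^ n

lemma cb_zero : cb 0 = 1 := by simp [cb]

lemma cb_pos (n : ℕ) : 0 < cb n := by
  have := Nat.centralBinom_pos n
  unfold cb
  positivity

lemma cb_succ (n : ℕ) : cb (n + 1) = cb n * ((2 * n + 1) / (2 * n + 2)) := by
  have h : ((n : ℝ) + 1) * (Nat.centralBinom (n + 1) : ℝ)
      = 2 * (2 * n + 1) * Nat.centralBinom n := by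
    exact_mod_cast Nat.succ_mul_centralBinom_succ n
  have h' : (Nat.centralBinom (n + 1) : ℝ) = 2 * (2 * n + 1) * Nat.centralBinom n / (n + 1) := by
    field_simp
    linarith
  unfold cb
  rw [h', pow_succ]
  field_simp
  ring

/-- `(2n + 1) * cb n ^ 2` is the reciprocal of the `n`-th Wallis product. -/
lemma cb_sq_eq (n : ℕ) :
    (2 * n + 1) * cb n ^ 2 = (∏ i ∈ Finset.range n,
      ((2 * (i : ℝ) + 2) / (2 * i + 1) * ((2 * i + 2) / (2 * i + 3))))⁻¹ := by
  induction n with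
  | zero => simp [cb_zero]
  | succ k ih =>
    rw [Finset.prod_range_succ, mul_inv, ← ih, cb_succ]
    push_cast
    field_simp
    ring

lemma tendsto_mul_cb_sq :
    Tendsto (fun n : ℕ => (2 * (n : ℝ) + 1) * cb n ^ 2) atTop (𝓝 (2 / π)) := by
  have h := Real.tendsto_prod_pi_div_two.inv₀ (by positivity)
  rw [inv_div] at h
  exact h.congr fun n => (cb_sq_eq n).symm

lemma tendsto_two_mul_add_one : Tendsto (fun n : ℕ => 2 * (n : ℝ) + 1) atTop atTop :=
  tendsto_atTop_add_const_right _ _ (tendsto_natCast_atTop_atTop.const_mul_atTop two_pos)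

lemma tendsto_cb : Tendsto cb atTop (𝓝 0) := by
  have h := (tendsto_mul_cb_sq.mul tendsto_two_mul_add_one.inv_tendsto_atTop).sqrt
  rw [mul_zero, Real.sqrt_zero] at h
  refine h.congr fun n => ?_
  have : (2 * (n : ℝ) + 1) * cb n ^ 2 * (2 * (n : ℝ) + 1)⁻¹ = cb n ^ 2 := by
    field_simp
  simp only [Pi.inv_apply, this, Real.sqrt_sq (cb_pos n).le]

/-- `H_{2n} - H_n`, the `2n`-th partial sum of the alternating harmonic series. -/
noncomputable def dH (n : ℕ) : ℝ := H (2 * n) - H n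

lemma dH_zero : dH 0 = 0 := by simp [dH]

lemma dH_succ (n : ℕ) : dH (n + 1) = dH n + 1 / ((2 * n + 1) * (2 * n + 2)) := by
  unfold dH H
  rw [show 2 * (n + 1) = 2 * n + 1 + 1 by ring, Finset.sum_range_succ, Finset.sum_range_succ,
    Finset.sum_range_succ]
  push_cast
  field_simp
  ring

lemma dH_nonneg (n : ℕ) : 0 ≤ dH n := by
  induction n with
  | zero => simp [dH_zero]
  | succ k ih => rw [dH_succ]; positivity

lemma tendsto_dH : Tendsto dH atTop (𝓝 (Real.log 2)) := by
  -- the Euler constants and logarithms in `H (2n)` and `H n` cancel up to `log 2`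
  have hH : ∀ n, ((harmonic n : ℚ) : ℝ) = H n := by
    intro n
    simp [harmonic, H]
  have h1 := Real.tendsto_harmonic_sub_log
  have h2 := h1.comp (tendsto_id.const_mul_atTop' (show 0 < 2 by norm_num))
  have h3 := (h2.sub h1).add_const (Real.log 2)
  rw [sub_self, zero_add] at h3
  refine h3.congr' ?_
  filter_upwards [eventually_gt_atTop 0] with n hn
  have hn' : (n : ℝ) ≠ 0 := by positivity
  simp only [Function.comp, id, hH, dH]
  push_cast
  rw [Real.log_mul two_ne_zero hn']
  ring

/-- The summand at index `n` is, up to a telescoping term, a multiple of `cb (n + 1) ^ 2 / (n + 1)`: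
Gosper's antidifference of `cb n ^ 2 / (2n - 1)` followed by Abel summation against `dH`. -/
lemma term_eq (n : ℕ) :
    (C n * (H (2 * n) - H n) / 4 ^ (2 * n)) * (Nat.choose (2 * n + 2) (n + 1) : ℝ)
      = (-8 * ((2 * (n + 1 : ℕ) + 1) * cb (n + 1) ^ 2) * (dH (n + 1) + 2))
        - (-8 * ((2 * n + 1) * cb n ^ 2) * (dH n + 2)) - 8 * (cb (n + 1) ^ 2 / (2 * n + 2)) := by
  have h1 : (Nat.choose (2 * n) n : ℝ) = cb n * 4 ^ n := by
    rw [← Nat.centralBinom_eq_two_mul_choose]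
    unfold cb
    field_simp
  have h2 : (Nat.choose (2 * n + 2) (n + 1) : ℝ) = cb (n + 1) * 4 ^ (n + 1) := by
    rw [show 2 * n + 2 = 2 * (n + 1) by ring, ← Nat.centralBinom_eq_two_mul_choose]
    unfold cb
    field_simp
  rw [h2, C, h1, dH_succ, cb_succ, ← dH, two_mul n, pow_add, pow_succ]
  push_cast
  field_simp
  ring

lemma partial_sum_eq (N : ℕ) :
    ∑ n ∈ Finset.range N,
      (C n * (H (2 * n) - H n) / 4 ^ (2 * n)) * (Nat.choose (2 * n + 2) (n + 1) : ℝ)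
      = -8 * ((2 * N + 1) * cb N ^ 2) * (dH N + 2) + 16
        - 8 * ∑ n ∈ Finset.range N, cb (n + 1) ^ 2 / (2 * n + 2) := by
  rw [Finset.sum_congr rfl fun n _ => term_eq n, Finset.sum_sub_distrib, ← Finset.mul_sum,
    Finset.sum_range_sub (fun n : ℕ => -8 * ((2 * (n : ℝ) + 1) * cb n ^ 2) * (dH n + 2))]
  simp only [cb_zero, dH_zero]
  push_cast
  ring

/-! ### Integrals over `[0, π/2]` -/

lemma integral_sin_pow_two_mul (n : ℕ) :
    ∫ x in (0 : ℝ)..π / 2, sin x ^ (2 * n) = π / 2 * cb n := by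
  induction n with
  | zero => simp [cb_zero]
  | succ k ih =>
    rw [show 2 * (k + 1) = 2 * k + 2 by ring, integral_sin_pow, ih, cb_succ]
    simp
    ring

/-- The factor `π/2 - x` vanishes at `π/2`, so integration by parts has no boundary term and reduces
this to the integral of `sin x ^ (2n + 2)`. -/
lemma integral_moment (n : ℕ) :
    ∫ x in (0 : ℝ)..π / 2, (π / 2 - x) * (cos x * sin x ^ (2 * n + 1))
      = π / 2 * (cb (n + 1) / (2 * n + 2)) := by
  have h := intervalIntegral.integral_mul_deriv_eq_deriv_mul (a := 0) (b := π / 2)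
    (u := fun x => π / 2 - x) (u' := fun _ => -1)
    (v := fun x => sin x ^ (2 * n + 2) / (2 * n + 2))
    (v' := fun x => cos x * sin x ^ (2 * n + 1))
    (fun x _ => by simpa using (hasDerivAt_id x).const_sub (π / 2))
    (fun x _ => by
      have := ((Real.hasDerivAt_sin x).pow (2 * n + 2)).div_const (2 * (n : ℝ) + 2)
      refine this.congr_deriv ?_
      push_cast
      field_simp)
    intervalIntegrable_const (Continuous.intervalIntegrable (by fun_prop) _ _)
  rw [h]
  have h2 := integral_sin_pow_two_mul (n + 1)
  rw [show 2 * (n + 1) = 2 * n + 2 by ring] at h2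
  simp only [neg_mul, one_mul, intervalIntegral.integral_neg, intervalIntegral.integral_div, h2]
  simp
  ring

lemma cos_half_pos {x : ℝ} (hx : x ∈ Set.Icc 0 (π / 2)) : 0 < cos (x / 2) := by
  apply Real.cos_pos_of_mem_Ioo
  constructor <;> linarith [hx.1, hx.2, Real.pi_pos]

lemma continuousOn_tan_half : ContinuousOn (fun x : ℝ => tan (x / 2)) (Set.Icc 0 (π / 2)) := by
  simp only [Real.tan_eq_sin_div_cos]
  exact ContinuousOn.div (by fun_prop) (by fun_prop) fun x hx => (cos_half_pos hx).ne'

/-- For `0 ≤ x < π/2`, `cos x` times the tail after the term `m = N` of the binomial series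
`∑ cb m * sin x ^ (2m) = (1 - sin² x)^{-1/2} = 1 / cos x`. -/
noncomputable def tailQ (N : ℕ) (x : ℝ) : ℝ :=
  1 - cos x * ∑ m ∈ Finset.range (N + 1), cb m * sin x ^ (2 * m)

/-- The derivative telescopes because `(2N + 2) * cb (N + 1) = (2N + 1) * cb N`. -/
lemma hasDerivAt_tailQ (N : ℕ) (x : ℝ) :
    HasDerivAt (tailQ N) ((2 * N + 1) * cb N * sin x ^ (2 * N + 1)) x := by
  induction N with
  | zero =>
    have : tailQ 0 = fun x => 1 - cos x := by
      funext x
      simp [tailQ, cb_zero]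
    rw [this]
    simpa [cb_zero] using (Real.hasDerivAt_cos x).const_sub 1
  | succ k ih =>
    have : tailQ (k + 1) = fun x => tailQ k x - cos x * (cb (k + 1) * sin x ^ (2 * k + 2)) := by
      funext x
      simp only [tailQ, Finset.sum_range_succ _ (k + 1)]
      ring
    rw [this]
    refine (ih.sub ((Real.hasDerivAt_cos x).mul
      (((Real.hasDerivAt_sin x).pow (2 * k + 2)).const_mul (cb (k + 1))))).congr_deriv ?_
    have hc : (2 * (k : ℝ) + 1) * cb k = (2 * k + 2) * cb (k + 1) := by
      rw [cb_succ]
      field_simp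
    rw [hc]
    push_cast
    have hcs := Real.cos_sq' x
    simp only [Pi.pow_apply]
    linear_combination (-(cb (k + 1) * (2 * k + 2) * sin x ^ (2 * k + 1))) * hcs

lemma tailQ_bounds (N : ℕ) {x : ℝ} (hx : x ∈ Set.Ioc 0 (π / 2)) :
    0 ≤ tailQ N x ∧ tailQ N x ≤ x * ((2 * N + 1) * cb N * sin x ^ (2 * N + 1)) := by
  obtain ⟨c, hc, h⟩ := exists_hasDerivAt_eq_slope (tailQ N) _ hx.1
    (fun y _ => (hasDerivAt_tailQ N y).continuousAt.continuousWithinAt)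
    (fun y _ => hasDerivAt_tailQ N y)
  have h0 : tailQ N 0 = 0 := by
    simp [tailQ, Finset.sum_range_succ', cb_zero]
  have hx0 := hx.1
  rw [h0, sub_zero, sub_zero, eq_div_iff hx0.ne'] at h
  have hs : 0 ≤ sin c := Real.sin_nonneg_of_nonneg_of_le_pi hc.1.le
    (by linarith [hc.2, hx.2, Real.pi_pos])
  have hsx : sin c ≤ sin x := Real.sin_le_sin_of_le_of_le_pi_div_two
    (by linarith [hc.1, Real.pi_pos]) hx.2 hc.2.le
  have hp := cb_pos N
  constructor
  · rw [← h]
    positivity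
  · rw [← h, mul_comm]
    gcongr

/-- `tan (x/2) = (1 - cos x) / sin x` minus its approximation
`cos x * ∑_{1 ≤ m ≤ N} cb m * sin x ^ (2m - 1)`. -/
noncomputable def tailR (N : ℕ) (x : ℝ) : ℝ :=
  tan (x / 2) - ∑ m ∈ Finset.range N, cb (m + 1) * (cos x * sin x ^ (2 * m + 1))

lemma sin_mul_tailR (N : ℕ) {x : ℝ} (hx : x ∈ Set.Icc 0 (π / 2)) :
    sin x * tailR N x = tailQ N x := by
  have hc := (cos_half_pos hx).ne'
  have h1 : sin x * tan (x / 2) = 1 - cos x := by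
    have e1 : sin x = 2 * sin (x / 2) * cos (x / 2) := by
      rw [← Real.sin_two_mul]; congr 1; ring
    have e2 : cos x = 2 * cos (x / 2) ^ 2 - 1 := by
      rw [← Real.cos_two_mul]; congr 1; ring
    have := Real.sin_sq_add_cos_sq (x / 2)
    rw [e1, e2, Real.tan_eq_sin_div_cos]
    field_simp
    linarith
  rw [tailR, tailQ, Finset.sum_range_succ', mul_sub, h1, Finset.mul_sum, mul_add, Finset.mul_sum,
    cb_zero]
  have : ∀ m, sin x * (cb (m + 1) * (cos x * sin x ^ (2 * m + 1)))
      = cos x * (cb (m + 1) * sin x ^ (2 * (m + 1))) := fun m => by ring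
  simp only [this]
  simp
  ring

lemma tailR_bounds (N : ℕ) {x : ℝ} (hx : x ∈ Set.Icc 0 (π / 2)) :
    0 ≤ tailR N x ∧ tailR N x ≤ π / 2 * ((2 * N + 1) * cb N * sin x ^ (2 * N + 1)) := by
  rcases hx.1.eq_or_lt with h0 | h0
  · subst h0
    simp [tailR]
  have hs : 0 < sin x := Real.sin_pos_of_pos_of_lt_pi h0 (by linarith [hx.2, Real.pi_pos])
  obtain ⟨h1, h2⟩ := tailQ_bounds N ⟨h0, hx.2⟩
  rw [← sin_mul_tailR N hx] at h1 h2
  refine ⟨nonneg_of_mul_nonneg_right h1 hs, le_of_mul_le_mul_left (h2.trans ?_) hs⟩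
  have h3 : x ≤ π / 2 * sin x := by
    have := Real.mul_le_sin hx.1 hx.2
    calc x = π / 2 * (2 / π * x) := by field_simp
      _ ≤ _ := by gcongr
  have hp := cb_pos N
  calc x * ((2 * N + 1) * cb N * sin x ^ (2 * N + 1))
      ≤ (π / 2 * sin x) * ((2 * N + 1) * cb N * sin x ^ (2 * N + 1)) := by gcongr
    _ = _ := by ring

lemma continuousOn_tailR (N : ℕ) : ContinuousOn (tailR N) (Set.Icc 0 (π / 2)) :=
  continuousOn_tan_half.sub (by fun_prop)

/-- The integral of `(π/2 - x) * tan (x/2)` over `[0, π/2]`; it equals `π log 2 - 2 G`. -/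
noncomputable def tanInt : ℝ := ∫ x in (0 : ℝ)..π / 2, (π / 2 - x) * tan (x / 2)

lemma integral_tailR_eq (N : ℕ) :
    ∫ x in (0 : ℝ)..π / 2, (π / 2 - x) * tailR N x
      = tanInt - π / 2 * ∑ n ∈ Finset.range N, cb (n + 1) ^ 2 / (2 * n + 2) := by
  have hpi : (0 : ℝ) ≤ π / 2 := by positivity
  have h : ∀ x, (π / 2 - x) * tailR N x = (π / 2 - x) * tan (x / 2)
      - ∑ m ∈ Finset.range N, cb (m + 1) * ((π / 2 - x) * (cos x * sin x ^ (2 * m + 1))) := by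
    intro x
    rw [tailR, mul_sub, Finset.mul_sum]
    congr 1
    exact Finset.sum_congr rfl fun m _ => by ring
  simp only [h]
  rw [intervalIntegral.integral_sub, intervalIntegral.integral_finsetSum, ← tanInt, Finset.mul_sum]
  · congr 1
    refine Finset.sum_congr rfl fun m _ => ?_
    rw [intervalIntegral.integral_const_mul, integral_moment]
    ring
  · exact fun m _ => Continuous.intervalIntegrable (by fun_prop) _ _
  · apply ContinuousOn.intervalIntegrable
    rw [Set.uIcc_of_le hpi]
    exact ContinuousOn.mul (by fun_prop) continuousOn_tan_half
  · exact Continuous.intervalIntegrable (by fun_prop) _ _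

lemma integral_cos_mul_sin_pow (n : ℕ) :
    ∫ x in (0 : ℝ)..π / 2, cos x * sin x ^ n = 1 / (n + 1) := by
  have h := intervalIntegral.integral_eq_sub_of_hasDerivAt (a := 0) (b := π / 2)
    (f := fun x => sin x ^ (n + 1) / (n + 1)) (f' := fun x => cos x * sin x ^ n)
    (fun x _ => by
      have := ((Real.hasDerivAt_sin x).pow (n + 1)).div_const ((n : ℝ) + 1)
      refine this.congr_deriv ?_
      push_cast
      field_simp)
    (Continuous.intervalIntegrable (by fun_prop) _ _)
  rw [h]
  simp

lemma integral_tailR_bounds (N : ℕ) :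
    0 ≤ ∫ x in (0 : ℝ)..π / 2, (π / 2 - x) * tailR N x ∧
      ∫ x in (0 : ℝ)..π / 2, (π / 2 - x) * tailR N x ≤ (π / 2) ^ 2 * cb N := by
  have hpi : (0 : ℝ) ≤ π / 2 := by positivity
  have hp := cb_pos N
  constructor
  · exact intervalIntegral.integral_nonneg hpi fun x hx =>
      mul_nonneg (by linarith [hx.2]) (tailR_bounds N hx).1
  calc ∫ x in (0 : ℝ)..π / 2, (π / 2 - x) * tailR N x
      ≤ ∫ x in (0 : ℝ)..π / 2,
        ((π / 2) ^ 2 * ((2 * N + 1) * cb N)) * (cos x * sin x ^ (2 * N + 1)) := by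
        apply intervalIntegral.integral_mono_on hpi
        · apply ContinuousOn.intervalIntegrable
          rw [Set.uIcc_of_le hpi]
          exact ContinuousOn.mul (by fun_prop) (continuousOn_tailR N)
        · exact Continuous.intervalIntegrable (by fun_prop) _ _
        · intro x hx
          have h1 : π / 2 - x ≤ π / 2 * cos x := by
            have := Real.one_sub_mul_le_cos hx.1 hx.2
            calc π / 2 - x = π / 2 * (1 - 2 / π * x) := by field_simp
              _ ≤ _ := by gcongr
          obtain ⟨h2, h3⟩ := tailR_bounds N hx
          calc (π / 2 - x) * tailR N x
              ≤ (π / 2 * cos x) * (π / 2 * ((2 * N + 1) * cb N * sin x ^ (2 * N + 1))) :=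
                mul_le_mul h1 h3 h2 (by linarith [hx.2])
            _ = _ := by ring
    _ = (π / 2) ^ 2 * (cb N * ((2 * N + 1) / (2 * N + 2))) := by
        rw [intervalIntegral.integral_const_mul, integral_cos_mul_sin_pow]
        push_cast
        field_simp
        ring
    _ ≤ (π / 2) ^ 2 * cb N := by
        gcongr
        apply mul_le_of_le_one_right hp.le
        rw [div_le_one (by positivity)]
        linarith

lemma tendsto_sum_cb_sq :
    Tendsto (fun N : ℕ => ∑ n ∈ Finset.range N, cb (n + 1) ^ 2 / (2 * (n : ℝ) + 2)) atTop
      (𝓝 (2 / π * tanInt)) := by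
  have h := squeeze_zero (fun N => (integral_tailR_bounds N).1)
    (fun N => (integral_tailR_bounds N).2) (by simpa using tendsto_cb.const_mul ((π / 2) ^ 2))
  have h2 := (h.const_sub tanInt).const_mul (2 / π)
  rw [sub_zero] at h2
  refine h2.congr fun N => ?_
  rw [integral_tailR_eq]
  field_simp
  ring

/-! ### Evaluation of the tangent integral by its Fourier sine expansion -/

/-- Conjugate Dirichlet kernel: the sine series of `tan (x/2)` with an explicit remainder. -/
lemma kernel_identity (n : ℕ) (x : ℝ) :
    cos (x / 2) * ∑ k ∈ Finset.range n, 2 * (-1) ^ k * sin ((k + 1) * x)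
      = sin (x / 2) - (-1) ^ n * sin ((n + 1 / 2) * x) := by
  induction n with
  | zero => simp; ring_nf
  | succ k ih =>
    rw [Finset.sum_range_succ, mul_add, ih]
    have e1 : sin ((k + 1 / 2) * x) = sin ((k + 1) * x) * cos (x / 2)
        - cos ((k + 1) * x) * sin (x / 2) := by
      rw [← Real.sin_sub]; congr 1; ring
    have e2 : sin (((k + 1 : ℕ) + 1 / 2) * x) = sin ((k + 1) * x) * cos (x / 2)
        + cos ((k + 1) * x) * sin (x / 2) := by
      rw [← Real.sin_add]; congr 1; push_cast; ring
    rw [e1, e2]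
    ring

lemma integral_sin_mul (w : ℝ) (hw : w ≠ 0) :
    ∫ x in (0 : ℝ)..π / 2, (π / 2 - x) * sin (w * x)
      = π / 2 / w - sin (w * (π / 2)) / w ^ 2 := by
  have h := intervalIntegral.integral_eq_sub_of_hasDerivAt (a := 0) (b := π / 2)
    (f := fun x => -(π / 2 - x) * cos (w * x) / w - sin (w * x) / w ^ 2)
    (f' := fun x => (π / 2 - x) * sin (w * x))
    (fun x _ => by
      have hl : HasDerivAt (fun x => w * x) w x := by simpa using (hasDerivAt_id x).const_mul w
      have h1 : HasDerivAt (fun x : ℝ => -(π / 2 - x)) 1 x := by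
        exact ((hasDerivAt_id x).const_sub (π / 2)).neg.congr_deriv (by simp)
      refine (((h1.mul hl.cos).div_const w).sub (hl.sin.div_const (w ^ 2))).congr_deriv ?_
      field_simp
      ring)
    (Continuous.intervalIntegrable (by fun_prop) _ _)
  rw [h]
  simp
  ring

/-- Up to the sign `(-1)^n`, the error in `tanInt` when `tan (x/2)` is replaced by the first `n` terms
of its (Abel summable) sine series `∑ 2 (-1)^k sin ((k+1) x)`. -/
noncomputable def errI (n : ℕ) : ℝ :=
  ∫ x in (0 : ℝ)..π / 2, (π / 2 - x) / cos (x / 2) * sin ((n + 1 / 2) * x)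

lemma continuousOn_errI_factor :
    ContinuousOn (fun x : ℝ => (π / 2 - x) / cos (x / 2)) (Set.Icc 0 (π / 2)) :=
  ContinuousOn.div (by fun_prop) (by fun_prop) fun _ hx => (cos_half_pos hx).ne'

lemma tanInt_eq (n : ℕ) :
    tanInt = ∑ k ∈ Finset.range n,
        2 * (-1) ^ k * (π / 2 / (k + 1) - sin ((k + 1) * (π / 2)) / ((k : ℝ) + 1) ^ 2)
      + (-1) ^ n * errI n := by
  have hpi : (0 : ℝ) ≤ π / 2 := by positivity
  have h : tanInt = ∫ x in (0 : ℝ)..π / 2,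
      (∑ k ∈ Finset.range n, 2 * (-1) ^ k * ((π / 2 - x) * sin ((k + 1) * x))
        + (-1) ^ n * ((π / 2 - x) / cos (x / 2) * sin ((n + 1 / 2) * x))) := by
    apply intervalIntegral.integral_congr
    intro x hx
    rw [Set.uIcc_of_le hpi] at hx
    have hc := (cos_half_pos hx).ne'
    have hk := kernel_identity n x
    have e : ∑ k ∈ Finset.range n, 2 * (-1) ^ k * ((π / 2 - x) * sin ((k + 1) * x))
        = (π / 2 - x) * ∑ k ∈ Finset.range n, 2 * (-1) ^ k * sin ((k + 1) * x) := by
      rw [Finset.mul_sum]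
      exact Finset.sum_congr rfl fun k _ => by ring
    simp only [e, Real.tan_eq_sin_div_cos]
    rw [eq_sub_iff_add_eq] at hk
    rw [← hk]
    field_simp
  rw [h, intervalIntegral.integral_add, intervalIntegral.integral_finsetSum,
    intervalIntegral.integral_const_mul, ← errI]
  · congr 1
    refine Finset.sum_congr rfl fun k _ => ?_
    rw [intervalIntegral.integral_const_mul, integral_sin_mul _ (by positivity)]
  · exact fun m _ => Continuous.intervalIntegrable (by fun_prop) _ _
  · exact Continuous.intervalIntegrable (by fun_prop) _ _
  · apply ContinuousOn.intervalIntegrable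
    rw [Set.uIcc_of_le hpi]
    exact ContinuousOn.mul (by fun_prop)
      (ContinuousOn.mul continuousOn_errI_factor (by fun_prop))

lemma fourier_sum_eq (N : ℕ) :
    ∑ k ∈ Finset.range (2 * N),
        2 * (-1) ^ k * (π / 2 / (k + 1) - sin ((k + 1) * (π / 2)) / ((k : ℝ) + 1) ^ 2)
      = π * dH N - 2 * ∑ j ∈ Finset.range N, (-1 : ℝ) ^ j / (2 * (j : ℝ) + 1) ^ 2 := by
  induction N with
  | zero => simp [dH_zero]
  | succ N ih =>
    rw [show 2 * (N + 1) = 2 * N + 1 + 1 by ring, Finset.sum_range_succ, Finset.sum_range_succ,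
      ih, dH_succ, Finset.sum_range_succ]
    have e1 : sin (((2 * N : ℕ) + 1) * (π / 2)) = (-1) ^ N := by
      rw [← Real.cos_nat_mul_pi, ← Real.sin_add_pi_div_two]; congr 1; push_cast; ring
    have e2 : sin (((2 * N + 1 : ℕ) + 1) * (π / 2)) = 0 := by
      rw [← Real.sin_nat_mul_pi (N + 1)]; congr 1; push_cast; ring
    have e3 : (-1 : ℝ) ^ (2 * N) = 1 := by simp
    have e4 : (-1 : ℝ) ^ (2 * N + 1) = -1 := by rw [pow_succ, e3, one_mul]
    rw [e1, e2, e4, e3]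
    push_cast
    field_simp
    ring

/-- Quantitative Riemann-Lebesgue estimate, by one integration by parts. -/
lemma errI_bound (n : ℕ) : |errI n| ≤ 3 * π / (n + 1 / 2) := by
  have hpi : (0 : ℝ) ≤ π / 2 := by positivity
  set w : ℝ := n + 1 / 2 with hw
  have hw0 : 0 < w := by positivity
  -- the derivative of `(π/2 - x) / cos (x/2)`
  set g' : ℝ → ℝ := fun x =>
    ((-1) * cos (x / 2) - (π / 2 - x) * (-sin (x / 2) * (1 / 2))) / cos (x / 2) ^ 2 with hg'
  have hcont : ContinuousOn g' (Set.uIcc 0 (π / 2)) := by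
    rw [Set.uIcc_of_le hpi]
    exact ContinuousOn.div (by fun_prop) (by fun_prop) fun _ hx =>
      pow_ne_zero 2 (cos_half_pos hx).ne'
  have h := intervalIntegral.integral_mul_deriv_eq_deriv_mul (a := 0) (b := π / 2)
    (u := fun x => (π / 2 - x) / cos (x / 2)) (u' := g')
    (v := fun x => -cos (w * x) / w)
    (v' := fun x => sin (w * x))
    (fun x hx => by
      rw [Set.uIcc_of_le hpi] at hx
      have hl : HasDerivAt (fun x : ℝ => x / 2) (1 / 2) x := (hasDerivAt_id x).div_const 2
      have h1 : HasDerivAt (fun x : ℝ => π / 2 - x) (-1) x := by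
        simpa using (hasDerivAt_id x).const_sub (π / 2)
      exact h1.div hl.cos (cos_half_pos hx).ne')
    (fun x _ => by
      have hl : HasDerivAt (fun x => w * x) w x := by simpa using (hasDerivAt_id x).const_mul w
      refine (hl.cos.neg.div_const w).congr_deriv ?_
      field_simp)
    hcont.intervalIntegrable
    (Continuous.intervalIntegrable (by fun_prop) _ _)
  have hb : ‖∫ x in (0 : ℝ)..π / 2, g' x * (-cos (w * x) / w)‖ ≤ (4 / w) * |π / 2 - 0| := by
    apply intervalIntegral.norm_integral_le_of_norm_le_const
    intro x hx
    rw [Set.uIoc_of_le hpi] at hx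
    have hx' : x ∈ Set.Icc 0 (π / 2) := ⟨hx.1.le, hx.2⟩
    have hc2 : 1 / 2 ≤ cos (x / 2) ^ 2 := by
      have := Real.cos_nonneg_of_mem_Icc (x := x) ⟨by linarith [hx.1], hx.2⟩
      rw [Real.cos_sq, mul_div_cancel₀ _ two_ne_zero]
      linarith
    have h1 : |g' x| ≤ 4 := by
      rw [hg']
      simp only
      rw [abs_div, abs_of_pos (show 0 < cos (x / 2) ^ 2 by linarith),
        div_le_iff₀ (by linarith)]
      have hs0 : 0 ≤ sin (x / 2) := Real.sin_nonneg_of_nonneg_of_le_pi (by linarith [hx.1])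
        (by linarith [hx.2, Real.pi_pos])
      have hs1 := Real.sin_le_one (x / 2)
      have hc1 := Real.cos_le_one (x / 2)
      have hc0 := (cos_half_pos hx').le
      have hy0 : 0 ≤ π / 2 - x := by linarith [hx.2]
      have hy2 : π / 2 - x ≤ 2 := by linarith [hx.1, Real.pi_le_four]
      have hm : (π / 2 - x) * sin (x / 2) ≤ 2 * 1 := by gcongr
      have hm0 : 0 ≤ (π / 2 - x) * sin (x / 2) := by positivity
      rw [abs_le]
      constructor <;> linarith
    rw [Real.norm_eq_abs, abs_mul, abs_div (-cos (w * x)), abs_neg, abs_of_pos hw0]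
    calc |g' x| * (|cos (w * x)| / w) ≤ 4 * (1 / w) := by
          gcongr
          exact Real.abs_cos_le_one _
      _ = 4 / w := by ring
  rw [errI, h]
  rw [Real.norm_eq_abs, sub_zero, abs_of_nonneg hpi] at hb
  simp only [sub_self, zero_div, zero_mul, sub_zero, mul_zero, Real.cos_zero, div_one, zero_sub]
  rw [abs_le] at hb ⊢
  have e : 3 * π / w = 4 / w * (π / 2) + π / w := by ring
  have e' : π / 2 * (-1 / w) = - (π / w) / 2 := by ring
  have : 0 < π / w := by positivity
  rw [e, e']
  constructor <;> linarith [hb.1, hb.2]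

lemma summable_G : Summable fun k : ℕ => (-1 : ℝ) ^ k / (2 * (k : ℝ) + 1) ^ 2 := by
  have h : Summable fun k : ℕ => 1 / ((k + 1 : ℕ) : ℝ) ^ 2 :=
    (summable_nat_add_iff 1).2 (Real.summable_one_div_nat_pow.2 one_lt_two)
  refine h.of_norm_bounded fun k => ?_
  rw [norm_div, norm_pow, norm_neg, norm_one, one_pow, norm_pow, Real.norm_of_nonneg (by positivity)]
  push_cast
  gcongr
  linarith [Nat.cast_nonneg (α := ℝ) k]

lemma tanInt_value : tanInt = π * Real.log 2 - 2 * G := by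
  have hG := summable_G.hasSum.tendsto_sum_nat
  have h1 := (tendsto_dH.const_mul π).sub (hG.const_mul 2)
  have h2 : Tendsto (fun N : ℕ => errI (2 * N)) atTop (𝓝 0) := by
    have hlim : Tendsto (fun N : ℕ => 3 * π / (2 * (N : ℝ) + 1)) atTop (𝓝 0) :=
      tendsto_two_mul_add_one.const_div_atTop _
    refine squeeze_zero_norm (fun N => (errI_bound (2 * N)).trans ?_)
      (by simpa using hlim.const_mul 2)
    rw [← mul_div_assoc, div_le_div_iff₀ (by positivity) (by positivity)]
    push_cast
    have : 0 ≤ π * N := by positivity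
    nlinarith [Real.pi_pos]
  have h3 := h1.add h2
  rw [add_zero] at h3
  refine tendsto_nhds_unique (tendsto_const_nhds.congr fun N => ?_) h3
  rw [← fourier_sum_eq, tanInt_eq (2 * N)]
  simp

theorem stmt_12 :
    ∑' n : ℕ,
        (C (n + 1) * (H (2 * (n + 1)) - H (n + 1)) / 4 ^ (2 * (n + 1))) *
        (Nat.choose (2 * (n + 1) + 2) (n + 2) : ℝ)
      = (16 / π) * (2 * G + π - 2 - Real.log 2 - π * Real.log 2) := by
  have hlim := ((((tendsto_mul_cb_sq.const_mul (-8)).mul (tendsto_dH.add_const 2)).add_const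
    16).sub (tendsto_sum_cb_sq.const_mul 8)).congr fun N => (partial_sum_eq N).symm
  have hnn : ∀ n : ℕ, 0 ≤
      (C n * (H (2 * n) - H n) / 4 ^ (2 * n)) * (Nat.choose (2 * n + 2) (n + 1) : ℝ) := by
    intro n
    have := dH_nonneg n
    rw [← dH, C]
    positivity
  have hsum := (hasSum_iff_tendsto_nat_of_nonneg hnn _).2 hlim
  -- the `n = 0` term vanishes since `H 0 - H 0 = 0`
  have h := (hasSum_nat_add_iff' 1).2 hsum
  rw [h.tsum_eq, tanInt_value]
  simp
  field_simp
  ring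
end

section
/- The series ∑_{n=1}^∞ (C_n · H_{2n}/16^n) · binom(2n,n) equals (2/π) · (2 + π − 2 ln 8). -/
/-!
Write `w n = binom(2n, n) / 4^n`, so that the series is `∑ w n ^ 2 * H (2n) / (n + 1)` (the term
`n = 0` vanishes because `H 0 = 0`). Since `4 n (w n)^2` is a discrete antiderivative of
`(w n)^2 / (n + 1)`, summation by parts expresses the partial sums through `N (w N)^2 H (2N)` and
the Landau sums `∑_{n < N} (w n)^2` (`sum_by_parts`).

The Landau sums are compared with the odd harmonic sums `∑_{n < N} 1 / (2n + 1)`. Over `[0, π/2]`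
one has `∫ cos^(2n) = (π/2) w n` and `∫ cos^(2n+1) = 1 / ((2n+1) w n)`, hence
`(π/2) (w n)^2 - 1/(2n+1) = ∫ w n cos^(2n) (1 - cos)`. The binomial series
`∑ w n x^n = (1 - x)^(-1/2)` then gives
`∑ ((π/2) (w n)^2 - 1/(2n+1)) = ∫ (1 - cos) / sin = ∫ sin / (1 + cos) = log 2` (`hasSum_landau`).

Wallis' inequalities give `4 n (w n)^2 = 4/π + O(1/n)`, so the remaining logarithmic divergences
cancel, leaving only `H (2N) - H N → log 2`.
-/

open Real

open Filter Topology Finset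

/-! ### Normalized central binomial coefficients -/

/-- The normalized central binomial coefficient `binom(2n, n) / 4^n`. -/
noncomputable def w (n : ℕ) : ℝ := (Nat.centralBinom n : ℝ) / 4 ^ n

lemma w_zero : w 0 = 1 := by simp [w]

lemma w_succ (n : ℕ) : w (n + 1) = w n * ((2 * n + 1) / (2 * n + 2)) := by
  have h : ((n : ℝ) + 1) * (n + 1).centralBinom = 2 * (2 * n + 1) * n.centralBinom := by
    exact_mod_cast Nat.succ_mul_centralBinom_succ n
  have h1 : ((n + 1).centralBinom : ℝ) = 2 * (2 * n + 1) * n.centralBinom / (n + 1) := by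
    rw [eq_div_iff (by positivity)]; linarith
  simp only [w]
  rw [h1]
  field_simp
  ring

lemma w_pos (n : ℕ) : 0 < w n := by
  have := Nat.centralBinom_pos n
  unfold w
  positivity

lemma w_eq_prod (n : ℕ) : w n = ∏ i ∈ range n, (2 * (i : ℝ) + 1) / (2 * i + 2) := by
  induction n with
  | zero => simp [w_zero]
  | succ n ih => rw [w_succ, prod_range_succ, ih]

lemma w_mul_prod (n : ℕ) :
    w n * ∏ i ∈ range n, (2 * (i : ℝ) + 2) / (2 * i + 3) = 1 / (2 * n + 1) := by
  induction n with
  | zero => simp [w_zero]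
  | succ n ih =>
    rw [w_succ, prod_range_succ, mul_mul_mul_comm, ih]
    push_cast
    field_simp
    ring

lemma wallis_eq (n : ℕ) : Real.Wallis.W n = 1 / ((2 * n + 1) * w n ^ 2) := by
  induction n with
  | zero => simp [Real.Wallis.W, w_zero]
  | succ n ih =>
    have := w_pos n
    rw [Real.Wallis.W_succ, ih, w_succ]
    push_cast
    field_simp
    ring

lemma w_eq_choose (n : ℕ) : Ring.choose ((1 / 2 : ℝ) + n - 1) n = w n := by
  have h0 : Ring.choose ((1 / 2 : ℝ) + n - 1) n = Ring.multichoose (1 / 2 : ℝ) n := by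
    rw [Ring.choose]; congr 1; ring
  have h := Ring.factorial_nsmul_multichoose_eq_ascPochhammer (1 / 2 : ℝ) n
  have h2 : (Polynomial.smeval (ascPochhammer ℕ n) (1 / 2 : ℝ)) = n.factorial * w n := by
    rw [Polynomial.ascPochhammer_smeval_eq_eval]
    clear h h0
    induction n with
    | zero => simp [w_zero]
    | succ n ih =>
      rw [ascPochhammer_succ_eval, ih, w_succ, Nat.factorial_succ]
      push_cast
      field_simp
      ring
  rw [h0]
  rw [h2, nsmul_eq_mul] at h
  exact mul_left_cancel₀ (by positivity) h

lemma hasSum_w {x : ℝ} (hx : |x| < 1) : HasSum (fun n => w n * x ^ n) (1 / √(1 - x)) := by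
  have h := (Real.one_div_one_sub_rpow_hasFPowerSeriesOnBall_zero (1 / 2)).hasSum (y := x)
    (by simpa [enorm_eq_nnnorm] using! hx)
  simp only [FormalMultilinearSeries.ofScalars_apply_eq, w_eq_choose, smul_eq_mul, zero_add,
    ← Real.sqrt_eq_rpow] at h
  exact h

/-! ### Landau sums via integrals -/

lemma integral_cos_even (n : ℕ) : ∫ x in (0 : ℝ)..π / 2, cos x ^ (2 * n) = π / 2 * w n := by
  rw [EulerSine.integral_cos_pow_eq, integral_sin_pow_even, ← w_eq_prod]
  ring

lemma w_mul_integral_cos_odd (n : ℕ) :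
    w n * ∫ x in (0 : ℝ)..π / 2, cos x ^ (2 * n + 1) = 1 / (2 * n + 1) := by
  rw [EulerSine.integral_cos_pow_eq, integral_sin_pow_odd, ← w_mul_prod]
  ring

lemma integral_landau_term (n : ℕ) :
    ∫ x in (0 : ℝ)..π / 2, w n * (cos x ^ 2) ^ n * (1 - cos x)
      = π / 2 * w n ^ 2 - 1 / (2 * n + 1) := by
  have h : ∀ x : ℝ, w n * (cos x ^ 2) ^ n * (1 - cos x)
      = w n * cos x ^ (2 * n) - w n * cos x ^ (2 * n + 1) := by
    intro x; rw [pow_succ (cos x) (2 * n), pow_mul]; ring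
  simp_rw [h]
  rw [intervalIntegral.integral_sub ((by fun_prop : Continuous _).intervalIntegrable _ _)
    ((by fun_prop : Continuous _).intervalIntegrable _ _), intervalIntegral.integral_const_mul,
    intervalIntegral.integral_const_mul, integral_cos_even, w_mul_integral_cos_odd]
  ring

lemma one_add_cos_pos {x : ℝ} (hx : x ∈ Set.Icc 0 (π / 2)) : 0 < 1 + cos x := by
  have := cos_nonneg_of_mem_Icc (x := x) ⟨by linarith [hx.1, pi_pos], hx.2⟩
  linarith

lemma intervalIntegrable_sin_div :
    IntervalIntegrable (fun x => sin x / (1 + cos x)) MeasureTheory.volume 0 (π / 2) := by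
  apply ContinuousOn.intervalIntegrable
  rw [Set.uIcc_of_le (by positivity)]
  exact ContinuousOn.div (by fun_prop) (by fun_prop) fun x hx => (one_add_cos_pos hx).ne'

lemma integral_sin_div : ∫ x in (0 : ℝ)..π / 2, sin x / (1 + cos x) = Real.log 2 := by
  rw [intervalIntegral.integral_eq_sub_of_hasDerivAt (f := fun x => -Real.log (1 + cos x)) ?_
    intervalIntegrable_sin_div]
  · norm_num
  · intro x hx
    rw [Set.uIcc_of_le (by positivity)] at hx
    have h := (((hasDerivAt_cos x).const_add 1).log (one_add_cos_pos hx).ne').neg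
    convert! h using 1
    ring

/-- The generating function of `w` at `cos² x`, weighted by `1 - cos x`. The point `x = 0`, where
the series of `w` diverges, is excluded. -/
lemma hasSum_w_cos {x : ℝ} (hx : x ∈ Set.Ioc 0 (π / 2)) :
    HasSum (fun n => w n * (cos x ^ 2) ^ n * (1 - cos x)) (sin x / (1 + cos x)) := by
  have hs : 0 < sin x := sin_pos_of_pos_of_lt_pi hx.1 (by linarith [hx.2, pi_pos])
  have hc := one_add_cos_pos ⟨hx.1.le, hx.2⟩
  have h1 : |cos x ^ 2| < 1 := by
    rw [abs_of_nonneg (sq_nonneg _)]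
    nlinarith [sin_sq_add_cos_sq x]
  convert! (hasSum_w h1).mul_right (1 - cos x) using 1
  rw [← Real.sin_sq, Real.sqrt_sq hs.le]
  field_simp
  nlinarith [sin_sq_add_cos_sq x]

/-- The Landau sums `∑ (w n)^2` exceed `(2/π) ∑ 1/(2n+1)` by `(2/π) log 2` in the limit. -/
lemma hasSum_landau :
    HasSum (fun n : ℕ => π / 2 * w n ^ 2 - 1 / (2 * n + 1)) (Real.log 2) := by
  simp_rw [← integral_landau_term]
  rw [← integral_sin_div]
  have hpi : (0 : ℝ) ≤ π / 2 := by positivity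
  -- The terms are nonnegative, so they serve as their own dominating functions.
  refine intervalIntegral.hasSum_integral_of_dominated_convergence
    (fun n x => w n * (cos x ^ 2) ^ n * (1 - cos x)) ?_ ?_ ?_ ?_ ?_
  · intro n
    exact (by fun_prop : Continuous _).aestronglyMeasurable
  · intro n
    refine Eventually.of_forall fun x _ => ?_
    have := w_pos n
    have := sub_nonneg.2 (cos_le_one x)
    rw [Real.norm_of_nonneg (by positivity)]
  · refine Eventually.of_forall fun x hx => ?_
    rw [Set.uIoc_of_le hpi] at hx
    exact (hasSum_w_cos hx).summable
  · refine intervalIntegrable_sin_div.congr ?_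
    intro x hx
    rw [Set.uIoc_of_le hpi] at hx
    exact (hasSum_w_cos hx).tsum_eq.symm
  · refine Eventually.of_forall fun x hx => ?_
    rw [Set.uIoc_of_le hpi] at hx
    exact hasSum_w_cos hx

/-! ### Harmonic numbers -/

lemma H_succ (n : ℕ) : H (n + 1) = H n + 1 / (n + 1) := by
  simp [H, sum_range_succ]

lemma H_two_mul_succ (n : ℕ) :
    H (2 * (n + 1)) = H (2 * n) + 1 / (2 * n + 1) + 1 / (2 * n + 2) := by
  rw [show 2 * (n + 1) = 2 * n + 1 + 1 by ring, H_succ, H_succ]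
  push_cast
  ring

lemma H_nonneg (n : ℕ) : 0 ≤ H n := sum_nonneg fun _ _ => by positivity

lemma sum_odd (N : ℕ) : ∑ n ∈ range N, 1 / (2 * (n : ℝ) + 1) = H (2 * N) - H N / 2 := by
  induction N with
  | zero => simp [H]
  | succ n ih =>
    rw [sum_range_succ, ih, H_two_mul_succ, H_succ]
    field_simp
    ring

lemma H_eq_harmonic (n : ℕ) : H n = harmonic n := by
  simp [H, harmonic]

lemma tendsto_two_mul : Tendsto (fun N : ℕ => 2 * N) atTop atTop :=
  tendsto_id.const_mul_atTop' (by norm_num)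

lemma tendsto_H_two_mul_sub :
    Tendsto (fun N : ℕ => H (2 * N) - H N) atTop (𝓝 (Real.log 2)) := by
  have h := Real.tendsto_harmonic_sub_log
  have h2 := ((h.comp tendsto_two_mul).sub h).add_const (Real.log 2)
  rw [sub_self, zero_add] at h2
  refine h2.congr' ?_
  filter_upwards [eventually_gt_atTop 0] with N hN
  have : (N : ℝ) ≠ 0 := by positivity
  simp only [Function.comp, H_eq_harmonic]
  push_cast
  rw [Real.log_mul two_ne_zero this]
  ring

lemma tendsto_H_div : Tendsto (fun N : ℕ => H N / N) atTop (𝓝 0) := by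
  have h := tendsto_one_div_add_atTop_nhds_zero_nat (𝕜 := ℝ)
  refine h.cesaro.congr fun N => ?_
  rw [H]
  ring

/-! ### Wallis estimates -/

lemma two_div_pi_le (n : ℕ) : 2 / π ≤ (2 * n + 1) * w n ^ 2 := by
  have h := Real.Wallis.W_le n
  have := w_pos n
  have := pi_pos
  rw [wallis_eq, div_le_div_iff₀ (by positivity) (by positivity)] at h
  rw [div_le_iff₀ (by positivity)]
  linarith

lemma le_two_div_pi (n : ℕ) : (2 * n + 1) * w n ^ 2 ≤ 2 / π * ((2 * n + 2) / (2 * n + 1)) := by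
  have h := Real.Wallis.le_W n
  have := w_pos n
  have := pi_pos
  rw [wallis_eq, le_div_iff₀ (by positivity)] at h
  calc (2 * n + 1) * w n ^ 2
      = ((2 * n + 1) / (2 * n + 2) * (π / 2) * ((2 * n + 1) * w n ^ 2)) *
        (2 / π * ((2 * n + 2) / (2 * n + 1))) := by field_simp
    _ ≤ 1 * (2 / π * ((2 * n + 2) / (2 * n + 1))) := by gcongr
    _ = _ := one_mul _

/-- The error in `4 n (w n)^2 ≈ 4/π` is `O(1/n)`, so it vanishes in the limit even after
multiplication by a harmonic number. -/
lemma abs_error_le (n : ℕ) (hn : 0 < n) : |4 * n * w n ^ 2 - 4 / π| ≤ 4 / (n : ℝ) := by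
  have h1 := two_div_pi_le n
  have h2 := le_two_div_pi n
  have hn' : (0 : ℝ) < n := by positivity
  have hp : 2 / π ≤ 1 := by rw [div_le_one pi_pos]; linarith [pi_gt_three]
  have hp0 : 0 < 2 / π := by positivity
  have e : (2 * (n : ℝ) + 2) / (2 * n + 1) = 1 + 1 / (2 * n + 1) := by field_simp; ring
  have e2 : 4 / π = 2 * (2 / π) := by ring
  have hq : 1 / (2 * (n : ℝ) + 1) ≤ 1 / n := by gcongr; linarith
  have hq0 : 0 < 1 / (2 * (n : ℝ) + 1) := by positivity
  have e3 : 4 / (n : ℝ) = 4 * (1 / n) := by ring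
  have hw : w n ^ 2 ≤ 2 * (1 / (2 * (n : ℝ) + 1)) := by
    rw [mul_one_div, le_div_iff₀ (by positivity)]
    have : 1 / (2 * (n : ℝ) + 1) ≤ 1 := by
      rw [div_le_one (by positivity)]; linarith
    rw [e] at h2
    nlinarith
  rw [e] at h2
  rw [abs_le, e2, e3]
  constructor <;> nlinarith [sq_nonneg (w n), mul_le_mul_of_nonneg_right hp hq0.le]

lemma tendsto_four_mul : Tendsto (fun n : ℕ => 4 * n * w n ^ 2) atTop (𝓝 (4 / π)) := by
  rw [tendsto_iff_norm_sub_tendsto_zero]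
  refine squeeze_zero' (Eventually.of_forall fun _ => norm_nonneg _) ?_
    (tendsto_const_div_atTop_nhds_zero_nat 4)
  filter_upwards [eventually_gt_atTop 0] with n hn using abs_error_le n hn

lemma tendsto_w_sq : Tendsto (fun n : ℕ => w n ^ 2) atTop (𝓝 0) := by
  have h := tendsto_four_mul.mul (tendsto_const_div_atTop_nhds_zero_nat (1 / 4 : ℝ))
  rw [mul_zero] at h
  refine h.congr' ?_
  filter_upwards [eventually_gt_atTop 0] with n hn
  field_simp

lemma tendsto_error_mul_H :
    Tendsto (fun n : ℕ => (4 * n * w n ^ 2 - 4 / π) * H (2 * n)) atTop (𝓝 0) := by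
  have h := (tendsto_H_div.comp tendsto_two_mul).const_mul 8
  rw [mul_zero] at h
  refine squeeze_zero_norm' ?_ h
  filter_upwards [eventually_gt_atTop 0] with n hn
  have hn' : (0 : ℝ) < n := by positivity
  rw [norm_mul, Real.norm_of_nonneg (H_nonneg _), Real.norm_eq_abs]
  calc _ ≤ 4 / n * H (2 * n) := mul_le_mul_of_nonneg_right (abs_error_le n hn) (H_nonneg _)
    _ = _ := by simp only [Function.comp]; push_cast; field_simp; ring

/-! ### Summation by parts and the limit -/

/-- Summation by parts: both `(w n)^2 / (n + 1)` and `(w n)^2 / (2n - 1)` have closed-form partial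
sums, so only the Landau sum remains. -/
lemma sum_by_parts (N : ℕ) :
    ∑ n ∈ range N, w n ^ 2 / (n + 1) * H (2 * n)
      = 4 * N * w N ^ 2 * H (2 * N) - 4 * ∑ n ∈ range N, w n ^ 2 + (4 * N - 2) * w N ^ 2 + 2 := by
  induction N with
  | zero => simp [H, w_zero]
  | succ n ih =>
    rw [sum_range_succ, sum_range_succ, ih, H_two_mul_succ, w_succ]
    push_cast
    field_simp
    ring

lemma tendsto_partial :
    Tendsto (fun N => ∑ n ∈ range N, w n ^ 2 / (n + 1) * H (2 * n)) atTop
      (𝓝 ((2 / π) * (2 + π - 2 * Real.log 8))) := by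
  have hL := hasSum_landau.tendsto_sum_nat
  have h := (((tendsto_error_mul_H.sub (tendsto_H_two_mul_sub.const_mul (4 / π))).sub
    (hL.const_mul (8 / π))).add (tendsto_four_mul.sub (tendsto_w_sq.const_mul 2))).add_const 2
  have h8 : Real.log 8 = 3 * Real.log 2 := by
    rw [show (8 : ℝ) = 2 ^ 3 by norm_num, Real.log_pow]; norm_num
  have hpi := pi_pos.ne'
  convert! h using 1
  · ext N
    rw [sum_by_parts, sum_sub_distrib, sum_odd, ← mul_sum]
    field_simp
    ring
  · rw [h8]
    congr 1
    field_simp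
    ring

theorem stmt_13 :
    ∑' n : ℕ,
        (C (n + 1) * H (2 * (n + 1)) / 16 ^ (n + 1)) *
        (Nat.choose (2 * (n + 1)) (n + 1) : ℝ)
      = (2 / π) * (2 + π - 2 * Real.log 8) := by
  have hterm : ∀ n : ℕ, (C n * H (2 * n) / 16 ^ n) * (Nat.choose (2 * n) n : ℝ)
      = w n ^ 2 / (n + 1) * H (2 * n) := by
    intro n
    rw [C, w, Nat.centralBinom, show (16 : ℝ) ^ n = (4 ^ n) ^ 2 by
      rw [← pow_mul, mul_comm, pow_mul]; norm_num]
    field_simp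
  have hs : HasSum (fun n : ℕ => w n ^ 2 / (n + 1) * H (2 * n))
      ((2 / π) * (2 + π - 2 * Real.log 8)) :=
    (hasSum_iff_tendsto_nat_of_nonneg
      (fun n => mul_nonneg (by positivity) (H_nonneg _)) _).2 tendsto_partial
  simp only [hterm]
  -- Shifting the index costs only the term `n = 0`, which is zero.
  have h1 := (hasSum_nat_add_iff' 1).2 hs
  simpa [H] using h1.tsum_eq
end

section
/- ζ(2) = ∑_{n=1}^∞ (1024 n / (3 (2n−1)^2 (2n+1) (2n+3)^2)) · binom(2n,n)/binom(2n+2, n+1). -/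
/-!
The quotient of consecutive central binomial coefficients is rational,
`binom(2m,m) / binom(2m+2,m+1) = (m+1) / (2(2m+1))`, so with `m = n + 1` the summand is a rational
function of `n`. A partial fraction expansion at the double poles `2m - 1`, `2m + 1`, `2m + 3`
shows that it equals `(4/3) / (2n+1)^2` plus a telescoping difference `G n - G (n+1)`, where
`G 0 = 0` and `G` tends to `0`. Hence the series is `4/3` times the sum of the reciprocals of the
odd squares, and that sum is `(3/4) ζ(2)`, because the even terms of `∑ 1/k^2` contribute
`ζ(2)/4`.
-/

open Filter Topology

theorem centralBinom_ratio (n : ℕ) :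
    (Nat.choose (2 * (n + 1)) (n + 1) : ℝ) / (Nat.choose (2 * (n + 1) + 2) (n + 2) : ℝ)
      = ((n : ℝ) + 2) / (2 * (2 * n + 3)) := by
  have h := Nat.succ_mul_centralBinom_succ (n + 1)
  have hpos : 0 < Nat.centralBinom (n + 1 + 1) := Nat.centralBinom_pos _
  rw [Nat.centralBinom_eq_two_mul_choose, Nat.centralBinom_eq_two_mul_choose,
    show 2 * (n + 1 + 1) = 2 * (n + 1) + 2 by ring] at h
  rw [Nat.centralBinom_eq_two_mul_choose,
    show 2 * (n + 1 + 1) = 2 * (n + 1) + 2 by ring] at hpos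
  have h' : ((n : ℝ) + 1 + 1) * (Nat.choose (2 * (n + 1) + 2) (n + 2) : ℝ)
      = 2 * (2 * ((n : ℝ) + 1) + 1) * (Nat.choose (2 * (n + 1)) (n + 1) : ℝ) := by
    exact_mod_cast h
  have hpos' : (0 : ℝ) < (Nat.choose (2 * (n + 1) + 2) (n + 2) : ℝ) := by exact_mod_cast hpos
  rw [div_eq_div_iff hpos'.ne' (by positivity)]
  linarith

/-- The telescoping part `G n` of the partial fraction expansion of the summand. -/
noncomputable def telescopingPart (n : ℕ) : ℝ :=
  2 / 3 * (1 / (2 * (n : ℝ) + 1) ^ 2) - 2 * (1 / (2 * (n : ℝ) + 3) ^ 2)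
    - 1 / 3 * (1 / (2 * (n : ℝ) + 1) + 1 / (2 * (n : ℝ) + 3))

theorem telescopingPart_zero : telescopingPart 0 = 0 := by
  norm_num [telescopingPart]

theorem tendsto_telescopingPart : Tendsto telescopingPart atTop (𝓝 0) := by
  have key : ∀ c : ℝ, Tendsto (fun n : ℕ => 1 / (2 * (n : ℝ) + c)) atTop (𝓝 0) := fun c => by
    simp only [one_div]
    exact tendsto_inv_atTop_zero.comp (tendsto_atTop_add_const_right _ _
      (tendsto_natCast_atTop_atTop.const_mul_atTop (by norm_num)))
  have h := ((((key 1).pow 2).const_mul (2 / 3)).sub (((key 3).pow 2).const_mul 2)).sub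
    (((key 1).add (key 3)).const_mul (1 / 3))
  convert h using 2
  · simp [telescopingPart]
  · norm_num

theorem summand_eq (n : ℕ) :
    (1024 * ((n : ℝ) + 1) /
      (3 * (2 * ((n : ℝ) + 1) - 1) ^ 2 * (2 * ((n : ℝ) + 1) + 1) *
        (2 * ((n : ℝ) + 1) + 3) ^ 2)) *
    ((Nat.choose (2 * (n + 1)) (n + 1) : ℝ) / (Nat.choose (2 * (n + 1) + 2) (n + 2) : ℝ))
      = 4 / 3 * (1 / (2 * (n : ℝ) + 1) ^ 2)
        + (telescopingPart n - telescopingPart (n + 1)) := by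
  rw [centralBinom_ratio, show 2 * ((n : ℝ) + 1) - 1 = 2 * n + 1 by ring,
    show 2 * ((n : ℝ) + 1) + 1 = 2 * n + 3 by ring,
    show 2 * ((n : ℝ) + 1) + 3 = 2 * n + 5 by ring]
  simp only [telescopingPart]
  push_cast
  rw [show 2 * ((n : ℝ) + 1) + 1 = 2 * n + 3 by ring,
    show 2 * ((n : ℝ) + 1) + 3 = 2 * n + 5 by ring]
  have h1 : 2 * (n : ℝ) + 1 ≠ 0 := by positivity
  have h3 : 2 * (n : ℝ) + 3 ≠ 0 := by positivity
  have h5 : 2 * (n : ℝ) + 5 ≠ 0 := by positivity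
  field_simp
  ring

theorem summable_one_div_succ_sq : Summable fun n : ℕ => 1 / ((n : ℝ) + 1) ^ 2 := by
  have h := (summable_nat_add_iff 1).2 (Real.summable_one_div_nat_pow.2 one_lt_two)
  simpa using h

theorem hasSum_odd_squares :
    HasSum (fun n : ℕ => 1 / (2 * (n : ℝ) + 1) ^ 2)
      (3 / 4 * ∑' n : ℕ, 1 / ((n : ℝ) + 1) ^ 2) := by
  have hs := summable_one_div_succ_sq
  have he : Summable fun n : ℕ => 1 / (2 * (n : ℝ) + 1) ^ 2 := by
    simpa [Function.comp_def] using hs.comp_injective (mul_right_injective₀ (two_ne_zero' ℕ))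
  have ho : HasSum (fun n : ℕ => 1 / (((2 * n + 1 : ℕ) : ℝ) + 1) ^ 2)
      (1 / 4 * ∑' n : ℕ, 1 / ((n : ℝ) + 1) ^ 2) := by
    have hterm : (fun n : ℕ => 1 / (((2 * n + 1 : ℕ) : ℝ) + 1) ^ 2)
        = fun n : ℕ => 1 / 4 * (1 / ((n : ℝ) + 1) ^ 2) := by
      funext n
      rw [show ((2 * n + 1 : ℕ) : ℝ) + 1 = 2 * ((n : ℝ) + 1) by push_cast; ring, mul_pow,
        one_div_mul_one_div]
      norm_num
    rw [hterm]
    exact hs.hasSum.mul_left (1 / 4)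
  -- The index is shifted: even `k` in `1 / (k + 1) ^ 2` give the odd squares.
  have he' : HasSum (fun n : ℕ => 1 / (((2 * n : ℕ) : ℝ) + 1) ^ 2)
      (∑' n : ℕ, 1 / (2 * (n : ℝ) + 1) ^ 2) := by
    simpa only [Nat.cast_mul, Nat.cast_ofNat] using he.hasSum
  have hsum := HasSum.even_add_odd (f := fun n : ℕ => 1 / ((n : ℝ) + 1) ^ 2) he' ho
  have := hsum.unique hs.hasSum
  convert he.hasSum using 1
  linarith

open Real

theorem stmt_14 :
    (∑' n : ℕ, 1 / ((n : ℝ) + 1) ^ 2)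
      = ∑' n : ℕ,
          (1024 * ((n : ℝ) + 1) /
            (3 * (2 * ((n : ℝ) + 1) - 1) ^ 2 * (2 * ((n : ℝ) + 1) + 1) *
              (2 * ((n : ℝ) + 1) + 3) ^ 2)) *
          ((Nat.choose (2 * (n + 1)) (n + 1) : ℝ) /
            (Nat.choose (2 * (n + 1) + 2) (n + 2) : ℝ)) := by
  symm
  apply HasSum.tsum_eq
  -- The terms are nonnegative, so convergence of the partial sums is enough.
  rw [hasSum_iff_tendsto_nat_of_nonneg (fun n => by positivity)]
  simp only [summand_eq, Finset.sum_add_distrib, Finset.sum_range_sub', telescopingPart_zero,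
    ← Finset.mul_sum]
  have h := (hasSum_odd_squares.tendsto_sum_nat.const_mul (4 / 3)).add
    (tendsto_telescopingPart.const_sub 0)
  convert h using 2
  ring
end

section
/- The series ∑_{n=1}^∞ (n^2/(16^n (2n−1)^2 (2n+1))) · binom(2n,n)^2 equals G/(4π) + 1/(8π). -/
/-!
Write `b m = C(2m, m) / 4 ^ m` (`normBinom m`). Since `b (n + 1) = b n * (2n + 1) / (2n + 2)`, the summand is
`(1/4) * b n ^ 2 / (2n + 3)`, so the claim is `∑ b m ^ 2 / (2m + 3) = G / π + 1 / (2π)`.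

* Telescoping. With `T m = m ^ 2 * b m ^ 2 / (2m + 1)` one has
  `T (m + 1) - T m = b m ^ 2 / (2m + 3) - (1/4) * b m ^ 2 / (2m + 1)`, and the Wallis product gives
  `T m → 1 / (2π)` (`boundary_sub`, `tendsto_boundary`). It remains to see that
  `∑ b m ^ 2 / (2m + 1) = 4 G / π`.
* Integral representation. Integrating `∑ b m * sin t ^ (2m) * cos t = 1` over `[0, θ]` yields the
  arcsine series `∑ b m / (2m + 1) * sin θ ^ (2m) = θ / sin θ` (`hasSum_inv_sinc`). Integrating this
  over `[0, π/2]`, where `sin ^ (2m)` has integral `(π/2) * b m`, gives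
  `∑ b m ^ 2 / (2m + 1) = (2/π) * ∫ θ / sin θ`.
* The integral `∫ θ / sin θ = 2 G`. From `2 * ∑_{k<n} sin ((2k+1) t) = (1 - cos (2nt)) / sin t`
  and `∫ t * sin ((2k+1) t) = (-1) ^ k / (2k+1) ^ 2`, twice the partial sums of `G` differ from
  `∫ t / sin t` by `∫ (t / sin t) * cos (2nt)`, which vanishes in the limit by the
  Riemann–Lebesgue lemma.

The function `t / sin t` is written `(sinc t)⁻¹`, which is also continuous at `0`.
-/

open Real

open Filter Topology MeasureTheory Set
open scoped Interval FourierTransform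

/-- The normalized central binomial coefficient `C(2m, m) / 4 ^ m`. -/
noncomputable def normBinom (m : ℕ) : ℝ := (Nat.centralBinom m : ℝ) / 4 ^ m

lemma normBinom_zero : normBinom 0 = 1 := by simp [normBinom]

lemma normBinom_nonneg (m : ℕ) : 0 ≤ normBinom m := by unfold normBinom; positivity

lemma normBinom_succ (m : ℕ) :
    normBinom (m + 1) = normBinom m * ((2 * m + 1) / (2 * m + 2)) := by
  have h : ((m : ℝ) + 1) * (Nat.centralBinom (m + 1) : ℝ)
      = 2 * (2 * m + 1) * Nat.centralBinom m := by
    exact_mod_cast Nat.succ_mul_centralBinom_succ m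
  unfold normBinom
  field_simp
  rw [pow_succ]
  linear_combination 2 * 4 ^ m * h

lemma multichoose_half (m : ℕ) : Ring.multichoose (1 / 2 : ℝ) m = normBinom m := by
  have key : ∀ m : ℕ, (m.factorial : ℝ) * normBinom m
      = (ascPochhammer ℕ m).smeval (1 / 2 : ℝ) := by
    intro m
    induction m with
    | zero => simp [normBinom_zero]
    | succ m ih =>
      rw [ascPochhammer_succ_right, Polynomial.smeval_mul, ← ih, normBinom_succ,
        Nat.factorial_succ, Polynomial.smeval_add, Polynomial.smeval_X,
        ← Polynomial.C_eq_natCast, Polynomial.smeval_C]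
      push_cast
      simp
      field_simp
      ring
  have h := Ring.factorial_nsmul_multichoose_eq_ascPochhammer (1 / 2 : ℝ) m
  rw [← key, nsmul_eq_mul] at h
  exact mul_left_cancel₀ (by positivity) h

/-- The binomial series of `(1 - y) ^ (-1/2)`. -/
lemma hasSum_normBinom {y : ℝ} (h0 : 0 ≤ y) (h1 : y < 1) :
    HasSum (fun m => normBinom m * y ^ m) (1 / √(1 - y)) := by
  have h := (one_div_one_sub_rpow_hasFPowerSeriesOnBall_zero (1 / 2)).hasSum (y := y) (by
    simpa [enorm_eq_nnnorm, ← NNReal.coe_lt_coe, abs_of_nonneg h0] using h1)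
  simp only [FormalMultilinearSeries.ofScalars_apply_eq, zero_add] at h
  rw [Real.sqrt_eq_rpow]
  have hc : ∀ m : ℕ, Ring.choose (1 / 2 + (m : ℝ) - 1) m = normBinom m := by
    intro m
    rw [← multichoose_half, Ring.choose]
    congr 1
    ring
  simpa only [hc, smul_eq_mul] using h

/-- The arcsine series at `sin θ`, divided by `sin θ`. It follows by termwise integration of
`∑ b m * sin t ^ (2m) * cos t = 1`; the terms are nonnegative, so they dominate themselves. -/
lemma hasSum_inv_sinc {θ : ℝ} (h0 : 0 < θ) (h1 : θ < π / 2) :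
    HasSum (fun m : ℕ => normBinom m / (2 * m + 1) * sin θ ^ (2 * m)) (sinc θ)⁻¹ := by
  have hs : 0 < sin θ := sin_pos_of_pos_of_lt_pi h0 (by linarith)
  have hpt : ∀ t ∈ Ι 0 θ,
      HasSum (fun m : ℕ => normBinom m * sin t ^ (2 * m) * cos t) 1 := by
    intro t ht
    rw [uIoc_of_le h0.le] at ht
    have hc : 0 < cos t := cos_pos_of_mem_Ioo ⟨by linarith [ht.1], by linarith [ht.2]⟩
    have h2 := sin_sq_add_cos_sq t
    have h := (hasSum_normBinom (sq_nonneg (sin t)) (by nlinarith)).mul_right (cos t)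
    rw [show 1 - sin t ^ 2 = cos t ^ 2 by linarith, Real.sqrt_sq hc.le,
      one_div, inv_mul_cancel₀ hc.ne'] at h
    simpa only [pow_mul] using h
  have hnn : ∀ t ∈ Ι 0 θ, ∀ m : ℕ, 0 ≤ normBinom m * sin t ^ (2 * m) * cos t := by
    intro t ht m
    rw [uIoc_of_le h0.le] at ht
    have hc : 0 < cos t := cos_pos_of_mem_Ioo ⟨by linarith [ht.1], by linarith [ht.2]⟩
    have := normBinom_nonneg m
    rw [pow_mul]
    positivity
  have h := intervalIntegral.hasSum_integral_of_dominated_convergence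
    (μ := volume) (a := 0) (b := θ)
    (F := fun (m : ℕ) t => normBinom m * sin t ^ (2 * m) * cos t) (f := fun _ => (1 : ℝ))
    (fun (m : ℕ) t => normBinom m * sin t ^ (2 * m) * cos t)
    (fun m => Continuous.aestronglyMeasurable (by fun_prop))
    (fun m => .of_forall fun t ht => by rw [Real.norm_of_nonneg (hnn t ht m)])
    (.of_forall fun t ht => (hpt t ht).summable)
    ((intervalIntegrable_const (c := (1 : ℝ))).congr
      (fun t ht => (hpt t ht).tsum_eq.symm))
    (.of_forall hpt)
  have hint : ∀ m : ℕ, ∫ t in 0..θ, normBinom m * sin t ^ (2 * m) * cos t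
      = normBinom m / (2 * m + 1) * sin θ ^ (2 * m) * sin θ := by
    intro m
    have hd : ∀ t ∈ uIcc 0 θ, HasDerivAt
        (fun t => normBinom m / (2 * m + 1) * sin t ^ (2 * m + 1))
        (normBinom m * sin t ^ (2 * m) * cos t) t := by
      intro t _
      convert! ((hasDerivAt_sin t).pow (2 * m + 1)).const_mul (normBinom m / (2 * m + 1)) using 1
      push_cast
      field_simp
    rw [intervalIntegral.integral_eq_sub_of_hasDerivAt hd
      (Continuous.intervalIntegrable (by fun_prop) _ _)]
    simp [pow_succ, mul_assoc]
  simp only [hint, intervalIntegral.integral_const, sub_zero, smul_eq_mul, mul_one] at h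
  have h' := h.div_const (sin θ)
  rw [sinc_of_ne_zero h0.ne', inv_div]
  simpa only [mul_div_assoc, div_self hs.ne', mul_one] using h'

lemma integral_sin_pow_quarter (m : ℕ) :
    ∫ t in 0..(π / 2), sin t ^ (2 * m) = π / 2 * normBinom m := by
  induction m with
  | zero => simp [normBinom_zero]
  | succ m ih =>
    rw [show 2 * (m + 1) = 2 * m + 2 by ring, integral_sin_pow, ih, normBinom_succ]
    simp
    field_simp

lemma sinc_pos_of_mem {t : ℝ} (ht : t ∈ Icc 0 (π / 2)) : 0 < sinc t := by
  rcases ht.1.eq_or_lt with rfl | h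
  · simp
  · rw [sinc_of_ne_zero h.ne']
    exact div_pos (sin_pos_of_pos_of_lt_pi h (by linarith [ht.2, pi_pos])) h

lemma continuousOn_inv_sinc : ContinuousOn (fun t => (sinc t)⁻¹) (Icc 0 (π / 2)) :=
  continuous_sinc.continuousOn.inv₀ fun _ ht => (sinc_pos_of_mem ht).ne'

lemma intervalIntegrable_inv_sinc :
    IntervalIntegrable (fun t => (sinc t)⁻¹) volume 0 (π / 2) :=
  ContinuousOn.intervalIntegrable (by
    rw [uIcc_of_le (by positivity)]; exact continuousOn_inv_sinc)

/-- Termwise integration of the series of `hasSum_inv_sinc`. -/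
lemma hasSum_normBinom_sq_integral :
    HasSum (fun m : ℕ => normBinom m ^ 2 / (2 * m + 1))
      (2 / π * ∫ t in 0..(π / 2), (sinc t)⁻¹) := by
  have hpt : ∀ᵐ t, t ∈ Ι 0 (π / 2) →
      HasSum (fun m : ℕ => normBinom m / (2 * m + 1) * sin t ^ (2 * m)) (sinc t)⁻¹ := by
    -- `hasSum_inv_sinc` excludes the endpoint `π / 2`, a null set.
    filter_upwards [Measure.ae_ne volume (π / 2)] with t hne ht
    rw [uIoc_of_le (by positivity)] at ht
    exact hasSum_inv_sinc ht.1 (lt_of_le_of_ne ht.2 hne)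
  have h := intervalIntegral.hasSum_integral_of_dominated_convergence
    (μ := volume) (a := 0) (b := π / 2)
    (F := fun (m : ℕ) t => normBinom m / (2 * m + 1) * sin t ^ (2 * m))
    (f := fun t => (sinc t)⁻¹)
    (fun (m : ℕ) t => normBinom m / (2 * m + 1) * sin t ^ (2 * m))
    (fun m => Continuous.aestronglyMeasurable (by fun_prop))
    (fun m => .of_forall fun t ht => by
      have := normBinom_nonneg m
      rw [pow_mul, Real.norm_of_nonneg (by positivity)])
    (hpt.mono fun t h ht => (h ht).summable)
    (intervalIntegrable_inv_sinc.congr_ae (by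
      rw [Filter.EventuallyEq, ae_restrict_iff' measurableSet_uIoc]
      exact hpt.mono fun t h ht => (h ht).tsum_eq.symm))
    hpt
  simp only [intervalIntegral.integral_const_mul, integral_sin_pow_quarter] at h
  have e : ∀ m : ℕ, 2 / π * (normBinom m / (2 * m + 1) * (π / 2 * normBinom m))
      = normBinom m ^ 2 / (2 * m + 1) := by
    intro m
    field_simp
  simpa only [e] using h.mul_left (2 / π)

lemma sin_mul_sum_two_sin_odd (n : ℕ) (t : ℝ) :
    sin t * ∑ k ∈ Finset.range n, 2 * sin ((2 * k + 1) * t) = 1 - cos (2 * n * t) := by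
  induction n with
  | zero => simp
  | succ n ih =>
    rw [Finset.sum_range_succ, mul_add, ih]
    push_cast
    rw [show 2 * ((n : ℝ) + 1) * t = (2 * n + 1) * t + t by ring,
      show 2 * (n : ℝ) * t = (2 * n + 1) * t - t by ring, cos_add, cos_sub]
    ring

lemma integral_mul_sin_odd (k : ℕ) :
    ∫ t in 0..(π / 2), t * (2 * sin ((2 * k + 1) * t))
      = 2 * ((-1) ^ k / (2 * (k : ℝ) + 1) ^ 2) := by
  have hd : ∀ t ∈ uIcc 0 (π / 2), HasDerivAt
      (fun t => 2 * sin ((2 * k + 1) * t) / (2 * (k : ℝ) + 1) ^ 2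
        - 2 * t * cos ((2 * k + 1) * t) / (2 * (k : ℝ) + 1))
      (t * (2 * sin ((2 * k + 1) * t))) t := by
    intro t _
    have hl : HasDerivAt (fun t : ℝ => (2 * (k : ℝ) + 1) * t) (2 * k + 1) t := by
      simpa using (hasDerivAt_id t).const_mul (2 * (k : ℝ) + 1)
    convert! ((hl.sin.const_mul 2).div_const ((2 * (k : ℝ) + 1) ^ 2)).sub
      ((((hasDerivAt_id t).const_mul 2).mul hl.cos).div_const (2 * (k : ℝ) + 1)) using 1
    simp
    field_simp
    ring
  rw [intervalIntegral.integral_eq_sub_of_hasDerivAt hd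
    (Continuous.intervalIntegrable (by fun_prop) _ _)]
  have e : (2 * (k : ℝ) + 1) * (π / 2) = π / 2 + k * π := by ring
  rw [e, sin_add_nat_mul_pi, cos_add_nat_mul_pi]
  simp
  ring

/-- Partial sums of Catalan's constant through the Dirichlet-type kernel
`(1 - cos (2nt)) / sin t`. -/
lemma two_mul_partial_sum (n : ℕ) :
    2 * ∑ k ∈ Finset.range n, (-1 : ℝ) ^ k / (2 * (k : ℝ) + 1) ^ 2
      = (∫ t in 0..(π / 2), (sinc t)⁻¹)
        - ∫ t in 0..(π / 2), (sinc t)⁻¹ * cos (2 * n * t) := by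
  rw [← intervalIntegral.integral_sub intervalIntegrable_inv_sinc
    (intervalIntegrable_inv_sinc.mul_continuousOn (by fun_prop)), Finset.mul_sum]
  simp_rw [← integral_mul_sin_odd]
  rw [← intervalIntegral.integral_finsetSum
    (fun k _ => Continuous.intervalIntegrable (by fun_prop) _ _)]
  refine intervalIntegral.integral_congr fun t ht => ?_
  rw [uIcc_of_le (by positivity)] at ht
  rw [← Finset.mul_sum]
  rcases ht.1.eq_or_lt with rfl | h
  · simp
  · have hs : 0 < sin t := sin_pos_of_pos_of_lt_pi h (by linarith [ht.2, pi_pos])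
    have := sin_mul_sum_two_sin_odd n t
    rw [sinc_of_ne_zero h.ne', inv_div]
    rw [← mul_one_sub, ← this, ← mul_assoc, div_mul_cancel₀ _ hs.ne']

/-- An instance of the Riemann–Lebesgue lemma. -/
lemma tendsto_integral_inv_sinc_mul_cos :
    Tendsto (fun n : ℕ => ∫ t in 0..(π / 2), (sinc t)⁻¹ * cos (2 * n * t)) atTop (𝓝 0) := by
  -- The character in the Fourier integral is `exp (-2πi v w)`, so the frequency `2n` corresponds to `w = n / π`.
  have hw : Tendsto (fun n : ℕ => (n : ℝ) / π) atTop (cocompact ℝ) :=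
    (tendsto_natCast_atTop_atTop.atTop_div_const pi_pos).mono_right atTop_le_cocompact
  have h := (Real.tendsto_integral_exp_smul_cocompact
    ((Ioc 0 (π / 2)).indicator fun t => (((sinc t)⁻¹ : ℝ) : ℂ))).comp hw
  have h2 := (Complex.continuous_re.tendsto 0).comp h
  simp only [Complex.zero_re] at h2
  refine h2.congr fun n => ?_
  simp only [Function.comp]
  have hi : ∀ v : ℝ, 𝐞 (-(v * (n / π))) •
      (Ioc 0 (π / 2)).indicator (fun t => (((sinc t)⁻¹ : ℝ) : ℂ)) v
      = (Ioc 0 (π / 2)).indicator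
        (fun t => 𝐞 (-(t * (n / π))) • (((sinc t)⁻¹ : ℝ) : ℂ)) v := by
    intro v
    by_cases hv : v ∈ Ioc 0 (π / 2) <;> simp [hv]
  have hint : IntegrableOn (fun t => 𝐞 (-(t * (n / π))) • (((sinc t)⁻¹ : ℝ) : ℂ))
      (Ioc 0 (π / 2)) := by
    refine (ContinuousOn.integrableOn_Icc ?_).mono_set Ioc_subset_Icc_self
    simp only [Circle.smul_def, Real.fourierChar_apply, smul_eq_mul]
    exact Continuous.continuousOn (by fun_prop) |>.mul
      (Complex.continuous_ofReal.comp_continuousOn continuousOn_inv_sinc)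
  simp_rw [hi]
  rw [integral_indicator measurableSet_Ioc, intervalIntegral.integral_of_le (by positivity),
    ← Complex.reCLM_apply, ← Complex.reCLM.integral_comp_comm hint]
  refine integral_congr_ae (.of_forall fun t => ?_)
  have e : ((2 * π * -(t * (n / π)) : ℝ) : ℂ) = ((-(2 * n * t) : ℝ) : ℂ) := by
    congr 1
    field_simp
  simp only [Circle.smul_def, Real.fourierChar_apply, smul_eq_mul, Complex.reCLM_apply, e,
    Complex.re_mul_ofReal, Complex.exp_ofReal_mul_I_re, cos_neg]
  ring

lemma integral_inv_sinc : ∫ t in 0..(π / 2), (sinc t)⁻¹ = 2 * G := by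
  have hsum : Summable fun k : ℕ => (-1 : ℝ) ^ k / (2 * (k : ℝ) + 1) ^ 2 := by
    have h1 : Summable fun k : ℕ => 1 / ((k : ℝ) + 1) ^ 2 := by
      exact_mod_cast (summable_nat_add_iff 1).2 (Real.summable_one_div_nat_pow.2 one_lt_two)
    refine Summable.of_norm_bounded h1 fun k => ?_
    rw [norm_div, norm_pow, norm_neg, norm_one, one_pow, Real.norm_of_nonneg (by positivity)]
    gcongr
    linarith [(Nat.cast_nonneg k : (0 : ℝ) ≤ k)]
  have hl := (hsum.hasSum.tendsto_sum_nat).const_mul 2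
  simp_rw [two_mul_partial_sum] at hl
  have hr := tendsto_integral_inv_sinc_mul_cos.const_sub (∫ t in 0..(π / 2), (sinc t)⁻¹)
  rw [sub_zero] at hr
  exact tendsto_nhds_unique hr hl

lemma hasSum_normBinom_sq :
    HasSum (fun m : ℕ => normBinom m ^ 2 / (2 * m + 1)) (4 * G / π) := by
  have h := hasSum_normBinom_sq_integral
  rw [integral_inv_sinc] at h
  convert h using 1
  ring

lemma normBinom_sq_mul_W (m : ℕ) : normBinom m ^ 2 * ((2 * m + 1) * Wallis.W m) = 1 := by
  induction m with
  | zero => simp [normBinom_zero, Wallis.W]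
  | succ m ih =>
    refine Eq.trans ?_ ih
    rw [normBinom_succ, Wallis.W_succ]
    push_cast
    field_simp
    ring

lemma tendsto_boundary :
    Tendsto (fun m : ℕ => (m : ℝ) ^ 2 * normBinom m ^ 2 / (2 * m + 1)) atTop
      (𝓝 (1 / (2 * π))) := by
  have h1 : Tendsto (fun m : ℕ => (m : ℝ) / (2 * m + 1)) atTop (𝓝 (1 / 2)) := by
    have := (tendsto_natCast_div_add_atTop (1 / 2 : ℝ)).mul_const (1 / 2)
    rw [one_mul] at this
    refine this.congr fun m => ?_
    field_simp
  have h2 := (h1.pow 2).div Wallis.tendsto_W_nhds_pi_div_two (by positivity)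
  have e : (1 / 2 : ℝ) ^ 2 / (π / 2) = 1 / (2 * π) := by field_simp
  rw [e] at h2
  refine h2.congr fun m => ?_
  have hW := Wallis.W_pos m
  have := normBinom_sq_mul_W m
  simp only [Pi.div_apply]
  field_simp
  linear_combination -(m : ℝ) ^ 2 * this

lemma boundary_sub (m : ℕ) :
    ((m + 1 : ℕ) : ℝ) ^ 2 * normBinom (m + 1) ^ 2 / (2 * (m + 1 : ℕ) + 1)
      - (m : ℝ) ^ 2 * normBinom m ^ 2 / (2 * m + 1)
    = normBinom m ^ 2 / (2 * m + 3) - 1 / 4 * (normBinom m ^ 2 / (2 * m + 1)) := by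
  rw [normBinom_succ]
  push_cast
  rw [show 2 * ((m : ℝ) + 1) + 1 = 2 * m + 3 by ring]
  field_simp
  ring

lemma hasSum_normBinom_sq_shift :
    HasSum (fun m : ℕ => normBinom m ^ 2 / (2 * m + 3)) (G / π + 1 / (2 * π)) := by
  rw [hasSum_iff_tendsto_nat_of_nonneg (fun m => by positivity)]
  have h := tendsto_boundary.add
    ((hasSum_normBinom_sq.tendsto_sum_nat).const_mul (1 / 4))
  rw [show 1 / (2 * π) + 1 / 4 * (4 * G / π) = G / π + 1 / (2 * π) by ring] at h
  refine h.congr fun n => ?_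
  have ht := Finset.sum_range_sub
    (fun m : ℕ => (m : ℝ) ^ 2 * normBinom m ^ 2 / (2 * m + 1)) n
  simp only [boundary_sub, Finset.sum_sub_distrib, ← Finset.mul_sum] at ht
  simp at ht ⊢
  linarith

theorem stmt_16 :
    ∑' n : ℕ,
        (((n : ℝ) + 1) ^ 2 /
          (16 ^ (n + 1) * (2 * ((n : ℝ) + 1) - 1) ^ 2 * (2 * ((n : ℝ) + 1) + 1))) *
        ((Nat.choose (2 * (n + 1)) (n + 1) : ℝ)) ^ 2
      = G / (4 * π) + 1 / (8 * π) := by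
  rw [show G / (4 * π) + 1 / (8 * π) = 1 / 4 * (G / π + 1 / (2 * π)) by ring]
  rw [← (hasSum_normBinom_sq_shift.mul_left (1 / 4)).tsum_eq]
  refine tsum_congr fun n => ?_
  have h := normBinom_succ n
  have hb : (Nat.choose (2 * (n + 1)) (n + 1) : ℝ) = 4 ^ (n + 1) * normBinom (n + 1) := by
    rw [normBinom, Nat.centralBinom_eq_two_mul_choose]
    field_simp
  rw [hb, h, show (16 : ℝ) = 4 ^ 2 by norm_num, ← pow_mul,
    show 2 * ((n : ℝ) + 1) - 1 = 2 * n + 1 by ring,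
    show 2 * ((n : ℝ) + 1) + 1 = 2 * n + 3 by ring]
  field_simp
  ring
end

section
/- For every real number x with 0 < |x| ≤ 1, the series ∑_{n=1}^∞ (2 n^2 x^{2n−1}/(4^n (2n−1)^2 (2n+1))) · binom(2n,n) equals (1/(8x^2)) · ((2x^2 + 1) arcsin x − x√(1−x^2)). -/
open Real

/-!
Write `c n = binom(2n, n) / 4 ^ n`. The recurrence `(2n + 2) * c (n + 1) = (2n + 1) * c n` and a
partial fraction decomposition turn the `n`-th summand (indexed from zero) into
`c n * x ^ (2n + 1) * (1 / (2n + 1) + 1 / (2n + 3)) / 4`. The binomial series gives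
`∑ c n * x ^ (2n) = 1 / √(1 - x²)` for `|x| < 1`; multiplying by `x ^ k` and integrating termwise
identifies `∑ c n * x ^ (2n + k + 1) / (2n + k + 1)` with the primitive of `x ^ k / √(1 - x²)`
vanishing at `0` (`hasSum_primitive`). These series converge uniformly on `[-1, 1]`, because
`c n / (2n + 1)` is dominated by the telescoping difference `2 * (c n - c (n + 1))`, so the identity
extends to the endpoints. The cases `k = 0`, with primitive `arcsin x`, and `k = 2`, with primitive
`(arcsin x - x * √(1 - x²)) / 2`, combine to the claim.
-/

/-- The normalised central binomial coefficient `binom(2n, n) / 4 ^ n`, which is the `n`-th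
Taylor coefficient of `1 / √(1 - t)`. -/
noncomputable def normCentral (n : ℕ) : ℝ := (Nat.centralBinom n : ℝ) / 4 ^ n

lemma normCentral_pos (n : ℕ) : 0 < normCentral n := by
  have : 0 < (Nat.centralBinom n : ℝ) := by exact_mod_cast Nat.centralBinom_pos n
  unfold normCentral
  positivity

lemma normCentral_succ (n : ℕ) :
    normCentral (n + 1) = normCentral n * (2 * n + 1) / (2 * n + 2) := by
  have h : ((n : ℝ) + 1) * Nat.centralBinom (n + 1) = 2 * (2 * n + 1) * Nat.centralBinom n := by
    exact_mod_cast Nat.succ_mul_centralBinom_succ n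
  unfold normCentral
  rw [pow_succ]
  field_simp
  linear_combination 2 * h

lemma multichoose_half_s17 (n : ℕ) : Ring.multichoose (1 / 2 : ℝ) n = normCentral n := by
  induction n with
  | zero => simp [normCentral]
  | succ n ih =>
    have h1 := Ring.factorial_nsmul_multichoose_eq_ascPochhammer (1 / 2 : ℝ) n
    have h2 := Ring.factorial_nsmul_multichoose_eq_ascPochhammer (1 / 2 : ℝ) (n + 1)
    rw [Polynomial.ascPochhammer_smeval_eq_eval] at h1 h2
    rw [ascPochhammer_succ_eval, ← h1, ih, Nat.factorial_succ] at h2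
    simp only [nsmul_eq_mul] at h2
    push_cast at h2
    have h3 : (n.factorial : ℝ) ≠ 0 := by positivity
    rw [normCentral_succ, eq_div_iff (by positivity)]
    apply mul_left_cancel₀ h3
    linear_combination 2 * h2

lemma hasSum_inv_sqrt {x : ℝ} (hx : |x| < 1) :
    HasSum (fun n : ℕ => normCentral n * x ^ (2 * n)) (1 / √(1 - x ^ 2)) := by
  have hx2 : x ^ 2 < 1 := by rwa [sq_lt_one_iff_abs_lt_one]
  have h := (Real.one_div_one_sub_rpow_hasFPowerSeriesOnBall_zero (1 / 2)).hasSum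
    (y := x ^ 2) (by
      rw [← ENNReal.ofReal_one, Metric.eball_ofReal]
      simpa using hx2)
  rw [zero_add, ← Real.sqrt_eq_rpow] at h
  convert! h using 2 with n
  rw [FormalMultilinearSeries.ofScalars_apply_eq, ← Ring.multichoose_eq, multichoose_half_s17,
    smul_eq_mul, pow_mul]

/-- Convergence at the endpoint `x = 1`, by comparison with a telescoping series. -/
lemma summable_normCentral_div : Summable fun n : ℕ => normCentral n / (2 * n + 1) := by
  refine summable_of_sum_range_le (c := 2) (fun n => ?_) (fun N => ?_)
  · have := normCentral_pos n
    positivity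
  · have key : ∀ n : ℕ, normCentral n / (2 * n + 1) ≤ 2 * (normCentral n - normCentral (n + 1)) := by
      intro n
      have hc := normCentral_pos n
      have e : 2 * (normCentral n - normCentral (n + 1)) = normCentral n / (n + 1) := by
        rw [normCentral_succ]
        field_simp
        ring
      rw [e]
      gcongr
      linarith [(Nat.cast_nonneg n : (0 : ℝ) ≤ n)]
    calc ∑ n ∈ Finset.range N, normCentral n / (2 * n + 1)
        ≤ ∑ n ∈ Finset.range N, 2 * (normCentral n - normCentral (n + 1)) :=
          Finset.sum_le_sum fun n _ => key n
      _ = 2 * (normCentral 0 - normCentral N) := by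
          rw [← Finset.mul_sum, Finset.sum_range_sub']
      _ ≤ 2 := by
          have h0 : normCentral 0 = 1 := by simp [normCentral]
          linarith [normCentral_pos N]

lemma norm_primitive_term_le (k n : ℕ) {x : ℝ} (hx : |x| ≤ 1) :
    ‖normCentral n * x ^ (2 * n + k + 1) / (2 * n + k + 1)‖ ≤ normCentral n / (2 * n + 1) := by
  have hc := normCentral_pos n
  have hd : (0 : ℝ) < 2 * n + k + 1 := by positivity
  rw [norm_div, norm_mul, norm_pow, Real.norm_eq_abs, Real.norm_eq_abs, Real.norm_eq_abs,
    abs_of_pos hc, abs_of_pos hd]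
  have hp : |x| ^ (2 * n + k + 1) ≤ 1 := pow_le_one₀ (abs_nonneg x) hx
  gcongr
  · nlinarith
  · linarith [(Nat.cast_nonneg k : (0 : ℝ) ≤ k)]

lemma hasDerivAt_tsum_primitive (k : ℕ) {x : ℝ} (hx : |x| < 1) :
    HasDerivAt (fun y : ℝ => ∑' n : ℕ, normCentral n * y ^ (2 * n + k + 1) / (2 * n + k + 1))
      (x ^ k / √(1 - x ^ 2)) x := by
  obtain ⟨r, hxr, hr1⟩ := exists_between hx
  have hr0 : 0 < r := (abs_nonneg x).trans_lt hxr
  have hsum : ∀ y : ℝ, |y| < 1 →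
      HasSum (fun n : ℕ => normCentral n * y ^ (2 * n + k)) (y ^ k / √(1 - y ^ 2)) := by
    intro y hy
    convert! (hasSum_inv_sqrt hy).mul_left (y ^ k) using 1
    · ext n
      ring
    · ring
  rw [← (hsum x hx).tsum_eq]
  refine hasDerivAt_tsum_of_isPreconnected (t := Set.Ioo (-r) r) (y₀ := 0)
    (g := fun n y => normCentral n * y ^ (2 * n + k + 1) / (2 * n + k + 1))
    (g' := fun n y => normCentral n * y ^ (2 * n + k))
    (hsum r (by rwa [abs_of_pos hr0])).summable isOpen_Ioo isPreconnected_Ioo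
    (fun n y _ => ?_) (fun n y hy => ?_) ⟨by linarith, hr0⟩ ?_ (abs_lt.mp hxr)
  · have hd : (2 * n + k + 1 : ℝ) ≠ 0 := by positivity
    have h := ((hasDerivAt_pow (2 * n + k + 1) y).const_mul (normCentral n)).div_const
      (2 * n + k + 1 : ℝ)
    convert! h using 1
    push_cast
    field_simp
  · have hc := normCentral_pos n
    rw [norm_mul, norm_pow, Real.norm_eq_abs, Real.norm_eq_abs, abs_of_pos hc]
    have := (abs_lt.mpr hy).le
    gcongr
  · simp

/-- Termwise integration: a function with derivative `x ^ k / √(1 - x²)` on `(-1, 1)` that vanishes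
at `0` and is continuous up to the endpoints is the sum of its Taylor series on all of
`[-1, 1]`. -/
lemma hasSum_primitive (k : ℕ) {G : ℝ → ℝ} (hG : Continuous G) (hG0 : G 0 = 0)
    (hG' : ∀ y, |y| < 1 → HasDerivAt G (y ^ k / √(1 - y ^ 2)) y) {x : ℝ} (hx : |x| ≤ 1) :
    HasSum (fun n : ℕ => normCentral n * x ^ (2 * n + k + 1) / (2 * n + k + 1)) (G x) := by
  set F : ℝ → ℝ := fun y => ∑' n : ℕ, normCentral n * y ^ (2 * n + k + 1) / (2 * n + k + 1)
    with hF
  have hcont : ContinuousOn F (Set.Icc (-1) 1) :=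
    continuousOn_tsum (fun n => by fun_prop) summable_normCentral_div
      fun n y hy => norm_primitive_term_le k n (abs_le.mpr hy)
  have hopen : Set.EqOn F G (Set.Ioo (-1) 1) := by
    refine isOpen_Ioo.eqOn_of_deriv_eq isPreconnected_Ioo (x := 0)
      (fun y hy => (hasDerivAt_tsum_primitive k
        (abs_lt.mpr hy)).differentiableAt.differentiableWithinAt)
      (fun y hy => (hG' y (abs_lt.mpr hy)).differentiableAt.differentiableWithinAt)
      (fun y hy => ?_) (by norm_num) ?_
    · rw [(hG' y (abs_lt.mpr hy)).deriv, (hasDerivAt_tsum_primitive k (abs_lt.mpr hy)).deriv]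
    · simp [hF, hG0]
  have hclosed : Set.EqOn F G (Set.Icc (-1) 1) :=
    hopen.of_subset_closure hcont hG.continuousOn Set.Ioo_subset_Icc_self
      (by rw [closure_Ioo (by norm_num)])
  rw [← hclosed (abs_le.mp hx)]
  exact (Summable.of_norm_bounded summable_normCentral_div
    fun n => norm_primitive_term_le k n hx).hasSum

lemma hasSum_arcsin {x : ℝ} (hx : |x| ≤ 1) :
    HasSum (fun n : ℕ => normCentral n * x ^ (2 * n + 1) / (2 * n + 1)) (arcsin x) := by
  have h := hasSum_primitive 0 continuous_arcsin arcsin_zero (fun y hy => ?_) hx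
  · simpa using h
  · rw [pow_zero]
    have := abs_lt.mp hy
    exact hasDerivAt_arcsin this.1.ne' this.2.ne

lemma hasSum_arcsin_sub {x : ℝ} (hx : |x| ≤ 1) :
    HasSum (fun n : ℕ => normCentral n * x ^ (2 * n + 3) / (2 * n + 3))
      ((arcsin x - x * √(1 - x ^ 2)) / 2) := by
  have h := hasSum_primitive 2 (G := fun y => (arcsin y - y * √(1 - y ^ 2)) / 2)
    (by fun_prop) (by simp) (fun y hy => ?_) hx
  · convert! h using 3 with n
    push_cast
    ring
  · have hy' := abs_lt.mp hy
    have hpos : 0 < 1 - y ^ 2 := by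
      have : y ^ 2 < 1 := by rwa [sq_lt_one_iff_abs_lt_one]
      linarith
    have hs : HasDerivAt (fun y : ℝ => √(1 - y ^ 2)) (-(2 * y) / (2 * √(1 - y ^ 2))) y := by
      have h1 : HasDerivAt (fun y : ℝ => 1 - y ^ 2) (-(2 * y)) y := by
        simpa using (hasDerivAt_pow 2 y).const_sub 1
      exact h1.sqrt hpos.ne'
    have hd := ((hasDerivAt_arcsin hy'.1.ne' hy'.2.ne).sub ((hasDerivAt_id y).mul hs)).div_const 2
    convert! hd using 1
    have hsq : √(1 - y ^ 2) ^ 2 = 1 - y ^ 2 := Real.sq_sqrt hpos.le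
    have hne : √(1 - y ^ 2) ≠ 0 := (Real.sqrt_pos.mpr hpos).ne'
    simp only [id]
    field_simp
    rw [hsq]
    ring

theorem stmt_17 (x : ℝ) (hx0 : 0 < |x|) (hx : |x| ≤ 1) :
    ∑' n : ℕ,
        (2 * ((n : ℝ) + 1) ^ 2 * x ^ (2 * (n + 1) - 1) /
          (4 ^ (n + 1) * (2 * ((n : ℝ) + 1) - 1) ^ 2 * (2 * ((n : ℝ) + 1) + 1))) *
        (Nat.choose (2 * (n + 1)) (n + 1) : ℝ)
      = (1 / (8 * x ^ 2)) * ((2 * x ^ 2 + 1) * Real.arcsin x - x * Real.sqrt (1 - x ^ 2)) := by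
  have hxne : x ≠ 0 := abs_pos.mp hx0
  have h := ((hasSum_arcsin hx).add ((hasSum_arcsin_sub hx).mul_left (1 / x ^ 2))).mul_left (1 / 4)
  have hval : 1 / 4 * (arcsin x + 1 / x ^ 2 * ((arcsin x - x * √(1 - x ^ 2)) / 2)) =
      (1 / (8 * x ^ 2)) * ((2 * x ^ 2 + 1) * arcsin x - x * √(1 - x ^ 2)) := by
    field_simp
    ring
  rw [← hval, ← h.tsum_eq]
  refine tsum_congr fun n => ?_
  have hc : ((Nat.choose (2 * (n + 1)) (n + 1) : ℕ) : ℝ) =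
      4 ^ (n + 1) * (normCentral n * (2 * n + 1) / (2 * n + 2)) := by
    rw [← normCentral_succ, normCentral, Nat.centralBinom_eq_two_mul_choose]
    field_simp
  have e1 : (2 * ((n : ℝ) + 1) - 1) = 2 * n + 1 := by ring
  have e2 : (2 * ((n : ℝ) + 1) + 1) = 2 * n + 3 := by ring
  have e3 : 2 * (n + 1) - 1 = 2 * n + 1 := by omega
  rw [hc, e1, e2, e3, pow_add x (2 * n) 3, pow_add x (2 * n) 1]
  field_simp
  ring
end

section
/- The series ∑_{n=1}^∞ (n/(4^n (2n−1)^2 (2n+1)(2n+3))) · binom(2n,n) equals 3π/256, and the series ∑_{n=1}^∞ (n^2/(4^n (2n−1)^2 (2n+1))) · binom(2n,n) equals 3π/32. -/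
open Real

/-!
Write `a m = binom(2m, m) / 4 ^ m`. The recurrence `(2m + 2) a (m + 1) = (2m + 1) a m` turns the
`n = m + 1` terms of the two series into

* `a m / (2 (2m + 1) (2m + 3) (2m + 5))`,
* `(m + 1) a m / (2 (2m + 1) (2m + 3))`,

which split by partial fractions into combinations of `a m / (2m + p)` with `p = 1, 3, 5`. The sums
of these are `π / 2`, `π / 4` and `3 π / 16`.

The first sum is the arcsine series at `1` (`hasSum_ctb_one`). Along `x = sin t`, its partial sum
`F N t` has derivative `1 - G N t`, where (for `N ≥ 1`) `G N` vanishes at `0` and has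
derivative `2 N a N sin ^ (2N - 1) t ≥ 0`. Hence `F N t ≤ t`, and since `π / 2 - t ≤ (π / 2) cos t`,
integration by parts gives `π / 2 - F N (π / 2) ≤ (π / 2) a N`, which tends to `0`.
The step from `p` to `p + 2` (`hasSum_ctb_step`) is a telescoping sum, the discrete form of
`(p + 1) ∫ x ^ (p + 1) / √(1 - x ^ 2) = p ∫ x ^ (p - 1) / √(1 - x ^ 2)` over `[0, 1]`.
-/

open Filter Topology

/-- The normalized central binomial coefficient `binom(2m, m) / 4 ^ m`, the coefficient of
`x ^ (2m)` in `1 / √(1 - x ^ 2)`. -/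
noncomputable def ctb (m : ℕ) : ℝ := (Nat.centralBinom m : ℝ) / 4 ^ m

lemma ctb_pos (m : ℕ) : 0 < ctb m := by
  have : 0 < (Nat.centralBinom m : ℝ) := by exact_mod_cast Nat.centralBinom_pos m
  unfold ctb; positivity

lemma ctb_zero : ctb 0 = 1 := by simp [ctb]

lemma ctb_succ (m : ℕ) : ctb (m + 1) = ctb m * (2 * m + 1) / (2 * (m + 1)) := by
  have h : ((m : ℝ) + 1) * Nat.centralBinom (m + 1) = 2 * (2 * m + 1) * Nat.centralBinom m := by
    exact_mod_cast Nat.succ_mul_centralBinom_succ m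
  unfold ctb
  rw [pow_succ]
  field_simp
  linarith

lemma ctb_sq_le (m : ℕ) : ctb m ^ 2 * (2 * m + 1) ≤ 1 := by
  induction m with
  | zero => simp [ctb_zero]
  | succ m ih =>
    refine le_trans ?_ ih
    rw [ctb_succ]
    push_cast
    have h : (ctb m * (2 * (m : ℝ) + 1) / (2 * (m + 1))) ^ 2 * (2 * (m + 1) + 1)
        = (ctb m ^ 2 * (2 * m + 1)) * (((2 * m + 1) * (2 * m + 3)) / (2 * (m + 1)) ^ 2) := by
      field_simp
      ring
    rw [h]
    refine mul_le_of_le_one_right (by positivity) ?_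
    rw [div_le_one (by positivity)]
    nlinarith

lemma tendsto_ctb : Tendsto ctb atTop (𝓝 0) := by
  have h2 : Tendsto (fun m : ℕ => ctb m ^ 2) atTop (𝓝 0) := by
    refine squeeze_zero (fun m => sq_nonneg _) (fun m => ?_)
      tendsto_one_div_add_atTop_nhds_zero_nat
    rw [le_div_iff₀ (by positivity)]
    have := ctb_sq_le m
    nlinarith [mul_nonneg (sq_nonneg (ctb m)) (Nat.cast_nonneg (α := ℝ) m)]
  have h3 := h2.sqrt
  simpa [Real.sqrt_sq (ctb_pos _).le] using h3

/-- The partial sum of the arcsine series at `sin t`. -/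
noncomputable def arcsinPartial (N : ℕ) (t : ℝ) : ℝ :=
  ∑ m ∈ Finset.range N, ctb m * sin t ^ (2 * m + 1) / (2 * m + 1)

/-- The defect `1 - d/dt (arcsinPartial N t)`. -/
noncomputable def arcsinDefect (N : ℕ) (t : ℝ) : ℝ :=
  1 - cos t * ∑ m ∈ Finset.range N, ctb m * sin t ^ (2 * m)

lemma hasDerivAt_arcsinPartial (N : ℕ) (t : ℝ) :
    HasDerivAt (arcsinPartial N) (1 - arcsinDefect N t) t := by
  have h : HasDerivAt (arcsinPartial N)
      (∑ m ∈ Finset.range N, cos t * (ctb m * sin t ^ (2 * m))) t := by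
    unfold arcsinPartial
    refine HasDerivAt.fun_sum fun m _ => ?_
    have := ((((hasDerivAt_sin t).pow (2 * m + 1)).const_mul (ctb m)).div_const
      (2 * (m : ℝ) + 1))
    refine this.congr_deriv ?_
    push_cast
    field_simp
  refine h.congr_deriv ?_
  simp [arcsinDefect, Finset.mul_sum]

/-- The derivative telescopes because `(2m + 2) a (m + 1) = (2m + 1) a m`. -/
lemma hasDerivAt_arcsinDefect (N : ℕ) (t : ℝ) :
    HasDerivAt (arcsinDefect N) (2 * N * ctb N * sin t ^ (2 * N - 1)) t := by
  induction N with
  | zero =>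
    have h : arcsinDefect 0 = fun _ => 1 := by funext t; simp [arcsinDefect]
    rw [h]
    simpa using hasDerivAt_const t (1 : ℝ)
  | succ N ih =>
    have h1 : arcsinDefect (N + 1) = fun t =>
        arcsinDefect N t - cos t * (ctb N * sin t ^ (2 * N)) := by
      funext t
      simp only [arcsinDefect, Finset.sum_range_succ]
      ring
    rw [h1]
    have h2 := (hasDerivAt_cos t).mul (((hasDerivAt_sin t).pow (2 * N)).const_mul (ctb N))
    refine (ih.sub h2).congr_deriv ?_
    rw [ctb_succ]
    push_cast
    have e : 2 * (N + 1) - 1 = 2 * N + 1 := by omega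
    rw [e]
    -- for `N = 0` the truncated exponent `2 * N - 1` is harmless: its coefficient vanishes
    rcases N with _ | k
    · simp
      ring
    · have e' : 2 * (k + 1) - 1 = 2 * k + 1 := by omega
      rw [e']
      have hc : cos t ^ 2 = 1 - sin t ^ 2 := by rw [cos_sq']
      simp only [Pi.pow_apply]
      push_cast
      field_simp
      ring_nf
      rw [hc]
      ring

lemma arcsinPartial_bounds (N : ℕ) :
    arcsinPartial N (π / 2) ≤ π / 2 ∧ π / 2 - arcsinPartial N (π / 2) ≤ π / 2 * ctb N := by
  have hpi := pi_pos
  have hsin : ∀ t ∈ Set.Icc 0 (π / 2), 0 ≤ sin t := fun t ht =>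
    sin_nonneg_of_nonneg_of_le_pi ht.1 (by linarith [ht.2])
  have hGd : ∀ t ∈ Set.Icc 0 (π / 2), 0 ≤ 2 * N * ctb N * sin t ^ (2 * N - 1) := fun t ht =>
    mul_nonneg (mul_nonneg (by positivity) (ctb_pos N).le) (pow_nonneg (hsin t ht) _)
  have h0 : (0 : ℝ) ∈ Set.Icc 0 (π / 2) := ⟨le_rfl, by positivity⟩
  have h1 : π / 2 ∈ Set.Icc 0 (π / 2) := ⟨by positivity, le_rfl⟩
  have hF0 : arcsinPartial N 0 = 0 := by simp [arcsinPartial]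
  have mono : ∀ f f' : ℝ → ℝ, (∀ t, HasDerivAt f (f' t) t) →
      (∀ t ∈ Set.Icc 0 (π / 2), 0 ≤ f' t) → MonotoneOn f (Set.Icc 0 (π / 2)) := by
    intro f f' hf hf'
    refine monotoneOn_of_hasDerivWithinAt_nonneg (convex_Icc _ _)
      (fun t _ => (hf t).continuousAt.continuousWithinAt)
      (fun t _ => (hf t).hasDerivWithinAt) fun t ht => hf' t (interior_subset ht)
  constructor
  · rcases N with _ | k
    · simp [arcsinPartial]; positivity
    have hG0 : arcsinDefect (k + 1) 0 = 0 := by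
      simp [arcsinDefect, Finset.sum_range_succ', ctb_zero]
    have hG : ∀ t ∈ Set.Icc 0 (π / 2), 0 ≤ arcsinDefect (k + 1) t := fun t ht => by
      rw [← hG0]
      exact mono _ _ (hasDerivAt_arcsinDefect (k + 1)) hGd h0 ht ht.1
    have := mono (fun t => t - arcsinPartial (k + 1) t) (arcsinDefect (k + 1))
      (fun t => ((hasDerivAt_id t).sub (hasDerivAt_arcsinPartial (k + 1) t)).congr_deriv (by ring))
      hG h0 h1 h1.1
    simp only [hF0] at this
    linarith
  · rcases N with _ | k
    · simp [arcsinPartial, ctb_zero]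
    have hG0 : arcsinDefect (k + 1) 0 = 0 := by
      simp [arcsinDefect, Finset.sum_range_succ', ctb_zero]
    set N := k + 1 with hN
    -- the integration by parts: the terms `± arcsinDefect N t` cancel in the derivative
    have hd : ∀ t, HasDerivAt (fun t => π / 2 * (ctb N * sin t ^ (2 * N)) -
        ((t - arcsinPartial N t) + (π / 2 - t) * arcsinDefect N t))
        ((π / 2 * cos t - (π / 2 - t)) * (2 * N * ctb N * sin t ^ (2 * N - 1))) t := by
      intro t
      have d1 := (((hasDerivAt_sin t).pow (2 * N)).const_mul (ctb N)).const_mul (π / 2)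
      have d2 := (hasDerivAt_id t).sub (hasDerivAt_arcsinPartial N t)
      have d3 := ((hasDerivAt_id t).const_sub (π / 2)).mul (hasDerivAt_arcsinDefect N t)
      refine (d1.sub (d2.add d3)).congr_deriv ?_
      push_cast
      simp only [id]
      ring
    have hnn : ∀ t ∈ Set.Icc 0 (π / 2), 0 ≤
        (π / 2 * cos t - (π / 2 - t)) * (2 * N * ctb N * sin t ^ (2 * N - 1)) := by
      intro t ht
      refine mul_nonneg ?_ (hGd t ht)
      -- the Jordan inequality at `π / 2 - t`
      have hj := mul_le_sin (x := π / 2 - t) (by linarith [ht.2]) (by linarith [ht.1])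
      rw [sin_pi_div_two_sub] at hj
      have : π / 2 * (2 / π * (π / 2 - t)) ≤ π / 2 * cos t :=
        mul_le_mul_of_nonneg_left hj (by positivity)
      have e : π / 2 * (2 / π * (π / 2 - t)) = π / 2 - t := by field_simp
      linarith
    have := mono _ _ hd hnn h0 h1 h1.1
    have hne : 2 * N ≠ 0 := by omega
    simp only [hF0, hG0, sin_zero, zero_pow hne, sin_pi_div_two, one_pow] at this
    linarith

/-- The arcsine series at `1`. -/
lemma hasSum_ctb_one : HasSum (fun m : ℕ => ctb m / (2 * m + 1)) (π / 2) := by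
  rw [hasSum_iff_tendsto_nat_of_nonneg
    (fun m => div_nonneg (ctb_pos m).le (by positivity))]
  have e : ∀ N, ∑ m ∈ Finset.range N, ctb m / (2 * (m : ℝ) + 1) = arcsinPartial N (π / 2) := by
    intro N; simp [arcsinPartial]
  simp only [e]
  have hl : Tendsto (fun N => π / 2 - π / 2 * ctb N) atTop (𝓝 (π / 2)) := by
    simpa using (tendsto_ctb.const_mul (π / 2)).const_sub (π / 2)
  refine tendsto_of_tendsto_of_tendsto_of_le_of_le hl tendsto_const_nhds (fun N => ?_)
    (fun N => (arcsinPartial_bounds N).1)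
  have := (arcsinPartial_bounds N).2
  simp only
  linarith

lemma hasSum_ctb_step {p s : ℝ} (hp : 0 < p) (h : HasSum (fun m : ℕ => ctb m / (2 * m + p)) s) :
    HasSum (fun m : ℕ => ctb m / (2 * m + (p + 2))) (p / (p + 1) * s) := by
  rw [hasSum_iff_tendsto_nat_of_nonneg
    (fun m => div_nonneg (ctb_pos m).le (by positivity))]
  have e : ∀ N : ℕ, ∑ m ∈ Finset.range N, ctb m / (2 * (m : ℝ) + (p + 2)) =
      p / (p + 1) * ∑ m ∈ Finset.range N, ctb m / (2 * (m : ℝ) + p)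
        - 1 / (p + 1) * (2 * N * ctb N / (2 * N + p)) := by
    intro N
    induction N with
    | zero => simp
    | succ N ih =>
      rw [Finset.sum_range_succ, Finset.sum_range_succ, ih, ctb_succ]
      push_cast
      have h1 : 2 * (N : ℝ) + p ≠ 0 := by positivity
      have h2 : 2 * (N : ℝ) + (p + 2) ≠ 0 := by positivity
      have h3 : 2 * ((N : ℝ) + 1) + p ≠ 0 := by positivity
      have h4 : p + 1 ≠ 0 := by positivity
      have h5 : 2 * ((N : ℝ) + 1) + p = 2 * (N : ℝ) + (p + 2) := by ring
      rw [h5]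
      field_simp
      ring
  simp only [e]
  have hz : Tendsto (fun N : ℕ => 2 * N * ctb N / (2 * (N : ℝ) + p)) atTop (𝓝 0) := by
    refine squeeze_zero (fun N => ?_) (fun N => ?_) tendsto_ctb
    · have := ctb_pos N
      positivity
    · rw [div_le_iff₀ (by positivity)]
      nlinarith [mul_pos (ctb_pos N) hp]
  simpa using (h.tendsto_sum_nat.const_mul (p / (p + 1))).sub (hz.const_mul (1 / (p + 1)))

theorem stmt_18 :
    (∑' n : ℕ,
        (((n : ℝ) + 1) /
          (4 ^ (n + 1) * (2 * ((n : ℝ) + 1) - 1) ^ 2 * (2 * ((n : ℝ) + 1) + 1) *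
            (2 * ((n : ℝ) + 1) + 3))) *
        (Nat.choose (2 * (n + 1)) (n + 1) : ℝ) = 3 * π / 256) ∧
    (∑' n : ℕ,
        (((n : ℝ) + 1) ^ 2 /
          (4 ^ (n + 1) * (2 * ((n : ℝ) + 1) - 1) ^ 2 * (2 * ((n : ℝ) + 1) + 1))) *
        (Nat.choose (2 * (n + 1)) (n + 1) : ℝ) = 3 * π / 32) := by
  have s1 := hasSum_ctb_one
  have s3 := hasSum_ctb_step one_pos s1
  have s5 := hasSum_ctb_step (by norm_num) s3
  have hch : ∀ n : ℕ, (Nat.choose (2 * (n + 1)) (n + 1) : ℝ) =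
      4 ^ (n + 1) * (ctb n * (2 * n + 1) / (2 * (n + 1))) := by
    intro n
    rw [← ctb_succ, ctb, Nat.centralBinom]
    field_simp
  constructor
  · have hs := ((s1.add s5).sub (s3.mul_left 2)).mul_left (1 / 16)
    have hv : 1 / 16 * (π / 2 + (1 + 2) / (1 + 2 + 1) * (1 / (1 + 1) * (π / 2)) -
        2 * (1 / (1 + 1) * (π / 2))) = 3 * π / 256 := by ring
    rw [hv] at hs
    rw [← hs.tsum_eq]
    refine tsum_congr fun n => ?_
    rw [hch]
    have e1 : 2 * ((n : ℝ) + 1) - 1 = 2 * n + 1 := by ring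
    have e2 : 2 * ((n : ℝ) + 1) + 1 = 2 * n + 3 := by ring
    have e3 : 2 * ((n : ℝ) + 1) + 3 = 2 * n + 5 := by ring
    have e4 : 2 * (n : ℝ) + (1 + 2) = 2 * n + 3 := by ring
    have e5 : 2 * (n : ℝ) + (1 + 2 + 2) = 2 * n + 5 := by ring
    rw [e1, e2, e3, e4, e5]
    field_simp
    ring
  · have hs := (s1.add s3).mul_left (1 / 8)
    have hv : 1 / 8 * (π / 2 + 1 / (1 + 1) * (π / 2)) = 3 * π / 32 := by ring
    rw [hv] at hs
    rw [← hs.tsum_eq]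
    refine tsum_congr fun n => ?_
    rw [hch]
    have e1 : 2 * ((n : ℝ) + 1) - 1 = 2 * n + 1 := by ring
    have e2 : 2 * ((n : ℝ) + 1) + 1 = 2 * n + 3 := by ring
    have e4 : 2 * (n : ℝ) + (1 + 2) = 2 * n + 3 := by ring
    rw [e1, e2, e4]
    field_simp
    ring
end
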